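/- arXiv:2502.00845 — 6 statements merged into one kernel-verified Lean document; each statement's English description precedes it below -/
import Mathlib

section
/- Let m > 1 be an integer with m ≡ 0 (mod 4) and let ε > 0. There exist a constant c > 0 and a real number X₀ such that for all real X ≥ X₀, the number of negative squarefree integers d such that the absolute value of the discriminant of the imaginary quadratic field ℚ(√d) is at most X and the ideal class group Cl(ℚ(√d)) contains an element of order m is at least c · X^(1/2 + 2/m − ε). -/
open NumberField

/-- `d` is a negative squarefree integer such that the imaginary quadratic field
`ℚ(√d)` (characterized as a degree-2 number field containing a square root of `d`)
has `|discriminant| ≤ X` and its ideal class group contains an element of order `m`. -/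
def GoodOrderM (m : ℕ) (X : ℝ) (d : ℤ) : Prop :=
  d < 0 ∧ Squarefree d ∧
  ∀ (K : Type) [Field K] [NumberField K],
    (∃ x : K, x * x = (d : K)) → Module.finrank ℚ K = 2 →
      (|NumberField.discr K| : ℝ) ≤ X ∧
      ∃ g : ClassGroup (𝓞 K), orderOf g = m


theorem qf_indep {K : Type} [Field K] [NumberField K] {d : ℤ} (hd : d < 0) {x : K}
    (hx : x * x = (d : K)) : LinearIndependent ℚ ![(1 : K), x] := by
  rw [LinearIndependent.pair_iff]
  intro s t h
  have h2 : (s : K) + (t : K) * x = 0 := by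
    simpa [Algebra.smul_def] using h
  have h3 : (s : K) ^ 2 = (t : K) ^ 2 * (d : K) := by
    rw [← hx]
    linear_combination ((s : K) - (t : K) * x) * h2
  have h4 : s ^ 2 = t ^ 2 * (d : ℚ) := by exact_mod_cast h3
  have hd' : (d : ℚ) < 0 := by exact_mod_cast hd
  have ht : t = 0 := by
    by_contra hne
    have : 0 < t ^ 2 := by positivity
    nlinarith [sq_nonneg s]
  refine ⟨?_, ht⟩
  rw [ht] at h4
  simpa using h4

theorem qf_basis {K : Type} [Field K] [NumberField K] {d : ℤ} (hd : d < 0) {x : K}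
    (hx : x * x = (d : K)) (h2 : Module.finrank ℚ K = 2) :
    ∃ b : Module.Basis (Fin 2) ℚ K, b 0 = 1 ∧ b 1 = x := by
  refine ⟨basisOfLinearIndependentOfCardEqFinrank (qf_indep hd hx) (by simp [h2]), ?_, ?_⟩ <;> simp

theorem qf_mat {K : Type} [Field K] [NumberField K] {d : ℤ} {x : K}
    (hx : x * x = (d : K)) (b : Module.Basis (Fin 2) ℚ K) (h0 : b 0 = 1) (h1 : b 1 = x) (r s : ℚ) :
    Algebra.leftMulMatrix b ((r : K) + (s : K) * x) = !![r, s * d; s, r] := by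
  have e0 : ((r : K) + (s : K) * x) * b 0 = r • b 0 + s • b 1 := by
    rw [h0, h1]; simp [Algebra.smul_def]
  have e1 : ((r : K) + (s : K) * x) * b 1 = (s * d) • b 0 + r • b 1 := by
    rw [h0, h1]; simp [Algebra.smul_def]
    linear_combination (s : K) * hx
  ext i j
  rw [Algebra.leftMulMatrix_eq_repr_mul]
  fin_cases i <;> fin_cases j <;> simp [e0, e1]

theorem qf_norm {K : Type} [Field K] [NumberField K] {d : ℤ} (hd : d < 0) {x : K}
    (hx : x * x = (d : K)) (h2 : Module.finrank ℚ K = 2) (r s : ℚ) :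
    Algebra.norm ℚ ((r : K) + (s : K) * x) = r ^ 2 - d * s ^ 2 := by
  obtain ⟨b, h0, h1⟩ := qf_basis hd hx h2
  rw [Algebra.norm_eq_matrix_det b, qf_mat hx b h0 h1, Matrix.det_fin_two_of]
  ring

theorem qf_trace {K : Type} [Field K] [NumberField K] {d : ℤ} (hd : d < 0) {x : K}
    (hx : x * x = (d : K)) (h2 : Module.finrank ℚ K = 2) (r s : ℚ) :
    Algebra.trace ℚ K ((r : K) + (s : K) * x) = 2 * r := by
  obtain ⟨b, h0, h1⟩ := qf_basis hd hx h2
  rw [Algebra.trace_eq_matrix_trace b, qf_mat hx b h0 h1, Matrix.trace_fin_two_of]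
  ring

theorem rat_int_of_sqfree {d : ℤ} (hd : Squarefree d) {s : ℚ} {n : ℤ} (h : (d : ℚ) * s ^ 2 = n) :
    ∃ b : ℤ, s = b := by
  have hden : (s.den : ℤ) = 1 := by
    have h1 : d * s.num ^ 2 = n * (s.den : ℤ) ^ 2 := by
      have : (s.den : ℚ) ≠ 0 := by exact_mod_cast s.den_nz
      rw [← Rat.num_div_den s] at h
      field_simp at h
      rw [mul_comm n]
      exact_mod_cast h
    have hc : IsCoprime ((s.den : ℤ) ^ 2) (s.num ^ 2) := by
      apply IsCoprime.pow
      rw [Int.isCoprime_iff_gcd_eq_one]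
      have := s.reduced
      rw [Nat.coprime_comm] at this
      simpa [Int.gcd] using this
    have h3 : (s.den : ℤ) ^ 2 ∣ d := hc.dvd_of_dvd_mul_right ⟨n, by rw [h1]; ring⟩
    have := hd (s.den : ℤ) (by rwa [← sq])
    rcases Int.isUnit_iff.mp this with h | h
    · exact h
    · have := s.den_pos; omega
  refine ⟨s.num, ?_⟩
  have := Rat.num_div_den s
  rw [← this]
  have h' : s.den = 1 := by exact_mod_cast hden
  simp [h']

theorem qf_half {K : Type} [Field K] [NumberField K] {d : ℤ} (hd : d < 0) (hsq : Squarefree d)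
    {x : K} (hx : x * x = (d : K)) (h2 : Module.finrank ℚ K = 2) (z : 𝓞 K) :
    ∃ a b : ℤ, 2 * (z : K) = a + b * x ∧ 4 * Algebra.norm ℤ z = a ^ 2 - d * b ^ 2 ∧
      Algebra.trace ℤ (𝓞 K) z = a := by
  obtain ⟨B, h0, h1⟩ := qf_basis hd hx h2
  have hz : (z : K) = ((B.repr z 0 : ℚ) : K) + ((B.repr z 1 : ℚ) : K) * x := by
    have := B.sum_repr (z : K)
    rw [Fin.sum_univ_two, h0, h1] at this
    simpa [Algebra.smul_def] using this.symm
  generalize B.repr z 0 = r at hz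
  generalize B.repr z 1 = s at hz
  have hn := Algebra.coe_norm_int z
  have ht := Algebra.coe_trace_int z
  rw [hz, qf_norm hd hx h2] at hn
  rw [hz, qf_trace hd hx h2] at ht
  set N := Algebra.norm ℤ z
  set T := Algebra.trace ℤ (𝓞 K) z
  obtain ⟨b, hb⟩ := rat_int_of_sqfree hsq (s := 2 * s) (n := T ^ 2 - 4 * N) (by
    push_cast; rw [hn, ht]; ring)
  refine ⟨T, b, ?_, ?_, rfl⟩
  · have hT : (T : K) = 2 * (r : K) := by exact_mod_cast congrArg (fun q : ℚ => (q : K)) ht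
    have hB : (2 : K) * (s : K) = (b : K) := by exact_mod_cast congrArg (fun q : ℚ => (q : K)) hb
    rw [hT, ← hB, hz]; ring
  · have : (4 * N : ℚ) = T ^ 2 - d * b ^ 2 := by rw [hn, ht, ← hb]; ring
    exact_mod_cast this

theorem qf_sqrt_int {K : Type} [Field K] [NumberField K] {d : ℤ} {x : K}
    (hx : x * x = (d : K)) : ∃ X : 𝓞 K, (X : K) = x ∧ X * X = (d : 𝓞 K) := by
  have hi : IsIntegral ℤ x := by
    apply IsIntegral.of_pow (n := 2) (by norm_num)
    rw [sq, hx]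
    exact isIntegral_algebraMap (R := ℤ) (x := d)
  obtain ⟨X, hX⟩ : ∃ X : 𝓞 K, algebraMap (𝓞 K) K X = x := ⟨⟨x, hi⟩, rfl⟩
  refine ⟨X, hX, ?_⟩
  apply RingOfIntegers.coe_injective
  rw [map_mul, map_intCast, hX]
  exact hx

theorem qf_discr {K : Type} [Field K] [NumberField K] {d : ℤ} (hd : d < 0) (hsq : Squarefree d)
    {x : K} (hx : x * x = (d : K)) (h2 : Module.finrank ℚ K = 2) :
    |NumberField.discr K| ≤ 4 * |d| ∧ |d| ≤ 4 * |NumberField.discr K| := by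
  obtain ⟨X, hXx, hX⟩ := qf_sqrt_int hx
  have hcard : Fintype.card (Module.Free.ChooseBasisIndex ℤ (𝓞 K)) = Fintype.card (Fin 2) := by
    rw [← Module.finrank_eq_card_chooseBasisIndex, RingOfIntegers.rank, h2]; simp
  let w : Module.Basis (Fin 2) ℤ (𝓞 K) :=
    (RingOfIntegers.basis K).reindex (Fintype.equivOfCardEq hcard)
  have hw : Algebra.discr ℤ w = discr K := discr_eq_discr K w
  have t1 : Algebra.trace ℤ (𝓞 K) (1 : 𝓞 K) = 2 := by
    have h : ((Algebra.trace ℤ (𝓞 K) (1 : 𝓞 K) : ℤ) : ℚ) =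
        Algebra.trace ℚ K (algebraMap (𝓞 K) K 1) := Algebra.coe_trace_int (1 : 𝓞 K)
    have h' := qf_trace hd hx h2 1 0
    simp only [Rat.cast_one, Rat.cast_zero, zero_mul, add_zero, mul_one] at h'
    rw [map_one (algebraMap (𝓞 K) K), h'] at h
    exact_mod_cast h
  have t2 : Algebra.trace ℤ (𝓞 K) X = 0 := by
    have h := Algebra.coe_trace_int X
    have h' := qf_trace hd hx h2 0 1
    simp only [Rat.cast_one, Rat.cast_zero, zero_add, one_mul, mul_zero] at h'
    rw [hXx, h'] at h
    exact_mod_cast h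
  have t3 : Algebra.trace ℤ (𝓞 K) (d : 𝓞 K) = 2 * d := by
    have h : ((Algebra.trace ℤ (𝓞 K) (d : 𝓞 K) : ℤ) : ℚ) =
        Algebra.trace ℚ K (algebraMap (𝓞 K) K d) := Algebra.coe_trace_int (d : 𝓞 K)
    have h' := qf_trace hd hx h2 d 0
    simp only [Rat.cast_intCast, Rat.cast_zero, zero_mul, add_zero] at h'
    rw [map_intCast (algebraMap (𝓞 K) K), h'] at h
    exact_mod_cast h
  have hD : Algebra.discr ℤ ![(1 : 𝓞 K), X] = 4 * d := by
    rw [Algebra.discr_def, Matrix.det_fin_two]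
    simp [Algebra.traceMatrix_apply, Algebra.traceForm_apply, t1, t2, t3, hX]
    ring
  have hdne : discr K ≠ 0 := discr_ne_zero K
  constructor
  · set P : Matrix (Fin 2) (Fin 2) ℤ := !![w.repr 1 0, w.repr 1 1; w.repr X 0, w.repr X 1]
    have hP : (P.map (algebraMap ℤ (𝓞 K))).mulVec w = ![1, X] := by
      ext i
      have e1 := w.sum_repr (1 : 𝓞 K)
      have eX := w.sum_repr X
      rw [Fin.sum_univ_two] at e1 eX
      fin_cases i
      · simpa [P, Matrix.mulVec, dotProduct, Fin.sum_univ_two] using congrArg (algebraMap (𝓞 K) K) e1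
      · simpa [P, Matrix.mulVec, dotProduct, Fin.sum_univ_two] using congrArg (algebraMap (𝓞 K) K) eX
    have := Algebra.discr_of_matrix_mulVec w P
    rw [hP, hD, hw] at this
    have hne : P.det ≠ 0 := by
      intro h; rw [h] at this; simp at this; omega
    have h1 : 1 ≤ P.det ^ 2 := by have : 0 < P.det ^ 2 := by positivity
                                  omega
    have h4 : 4 * |d| = P.det ^ 2 * |discr K| := by
      have := congrArg abs this
      rw [abs_mul, abs_mul, abs_pow, sq_abs] at this
      simpa using this
    rw [h4]
    nlinarith [abs_nonneg (discr K)]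
  · choose a b hab _ _ using qf_half hd hsq hx h2
    set P : Matrix (Fin 2) (Fin 2) ℤ := !![a (w 0), b (w 0); a (w 1), b (w 1)]
    have hP : (P.map (algebraMap ℤ (𝓞 K))).mulVec ![1, X] =
        ((!![2, 0; 0, 2] : Matrix (Fin 2) (Fin 2) ℤ).map (algebraMap ℤ (𝓞 K))).mulVec w := by
      ext i
      have e0 := hab (w 0)
      have e1 := hab (w 1)
      fin_cases i
      · simp only [Matrix.mulVec, dotProduct, Fin.sum_univ_two]
        simp [P, hXx, ← e0, map_ofNat (algebraMap (𝓞 K) K) 2]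
      · simp only [Matrix.mulVec, dotProduct, Fin.sum_univ_two]
        simp [P, hXx, ← e1, map_ofNat (algebraMap (𝓞 K) K) 2]
    have h := Algebra.discr_of_matrix_mulVec w (!![2, 0; 0, 2] : Matrix (Fin 2) (Fin 2) ℤ)
    rw [← hP, Algebra.discr_of_matrix_mulVec, hD, hw, show (!![2, 0; 0, 2] : Matrix (Fin 2) (Fin 2) ℤ).det = 4 by simp [Matrix.det_fin_two_of]] at h
    have hne : P.det ≠ 0 := by
      intro h'; rw [h'] at h; simp at h; exact hdne h
    have h1 : 1 ≤ P.det ^ 2 := by have : 0 < P.det ^ 2 := by positivity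
                                  omega
    have h4 : P.det ^ 2 * |d| = 4 * |discr K| := by
      have h5 : P.det ^ 2 * d = 4 * discr K := by linarith
      have := congrArg abs h5
      rw [abs_mul, abs_mul, abs_pow, sq_abs] at this
      simpa using this
    nlinarith [abs_nonneg d]


theorem idl_pow_step {R : Type} [CommRing R] {q α β a b c : R} {n : ℕ}
    (h1 : a * (α + β) + b * q = 1) (h2 : α * β = c * q ^ (n + 1)) :
    Ideal.span {q ^ n, α} * Ideal.span {q, α} = Ideal.span {q ^ (n + 1), α} := by
  rw [Ideal.span_pair_mul_span_pair]
  apply le_antisymm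
  · rw [Ideal.span_le]
    rintro y hy
    simp only [Set.mem_insert_iff, Set.mem_singleton_iff] at hy
    simp only [SetLike.mem_coe, Ideal.mem_span_pair]
    rcases hy with rfl | rfl | rfl | rfl
    · exact ⟨1, 0, by ring⟩
    · exact ⟨0, q ^ n, by ring⟩
    · exact ⟨0, q, by ring⟩
    · exact ⟨0, α, by ring⟩
  · set I := Ideal.span {q ^ n * q, q ^ n * α, α * q, α * α}
    have m1 : q ^ n * q ∈ I := Ideal.subset_span (by simp)
    have m3 : α * q ∈ I := Ideal.subset_span (by simp)
    have m4 : α * α ∈ I := Ideal.subset_span (by simp)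
    rw [Ideal.span_le]
    rintro y hy
    simp only [Set.mem_insert_iff, Set.mem_singleton_iff] at hy
    rcases hy with rfl | rfl
    · rw [pow_succ]; exact m1
    · have : y = a * (y * y) + a * c * (q ^ n * q) + b * (y * q) := by
        linear_combination (-y) * h1 + a * h2
      rw [SetLike.mem_coe, this]
      exact I.add_mem (I.add_mem (I.mul_mem_left _ m4) (I.mul_mem_left _ m1)) (I.mul_mem_left _ m3)

theorem idl_last {R : Type} [CommRing R] {Q α β a b : R}
    (h1 : a * 2 + b * Q = 1) (h2 : α * β = 2 * Q) :
    Ideal.span {Q, α} * Ideal.span {2, α} = Ideal.span {α} := by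
  rw [Ideal.span_pair_mul_span_pair]
  apply le_antisymm
  · rw [Ideal.span_le]
    rintro y hy
    simp only [Set.mem_insert_iff, Set.mem_singleton_iff] at hy
    simp only [SetLike.mem_coe, Ideal.mem_span_singleton]
    rcases hy with rfl | rfl | rfl | rfl
    · exact ⟨β, by rw [h2]; ring⟩
    · exact ⟨Q, by ring⟩
    · exact ⟨2, by ring⟩
    · exact ⟨α, by ring⟩
  · set I := Ideal.span {Q * 2, Q * α, α * 2, α * α}
    have m1 : Q * α ∈ I := Ideal.subset_span (by simp)
    have m3 : α * 2 ∈ I := Ideal.subset_span (by simp)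
    rw [Ideal.span_le]
    rintro y hy
    simp only [Set.mem_singleton_iff] at hy
    rw [hy]
    have : α = a * (α * 2) + b * (Q * α) := by linear_combination (-α) * h1
    rw [SetLike.mem_coe, this]
    exact I.add_mem (I.mul_mem_left _ m3) (I.mul_mem_left _ m1)

theorem idl_two {R : Type} [CommRing R] {Q α a b c : R}
    (h1 : a * 2 + b * Q = 1) (h2 : α * α = 2 * c * α - 2 * Q) :
    Ideal.span {2, α} * Ideal.span {2, α} = Ideal.span {2} := by
  rw [Ideal.span_pair_mul_span_pair]
  apply le_antisymm
  · rw [Ideal.span_le]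
    rintro y hy
    simp only [Set.mem_insert_iff, Set.mem_singleton_iff] at hy
    simp only [SetLike.mem_coe, Ideal.mem_span_singleton]
    rcases hy with rfl | rfl | rfl | rfl
    · exact ⟨2, by ring⟩
    · exact ⟨α, by ring⟩
    · exact ⟨α, by ring⟩
    · exact ⟨c * α - Q, by rw [h2]; ring⟩
  · set I := Ideal.span {2 * 2, 2 * α, α * 2, α * α}
    have m1 : 2 * 2 ∈ I := Ideal.subset_span (by simp)
    have m2 : 2 * α ∈ I := Ideal.subset_span (by simp)
    have m3 : α * α ∈ I := Ideal.subset_span (by simp)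
    rw [Ideal.span_le]
    rintro y hy
    simp only [Set.mem_singleton_iff] at hy
    rw [hy]
    have : (2 : R) = a * (2 * 2) + b * c * (2 * α) + (-b) * (α * α) := by
      linear_combination (-2) * h1 + b * h2
    rw [SetLike.mem_coe]
    nth_rw 1 [this]
    exact I.add_mem (I.add_mem (I.mul_mem_left _ m1) (I.mul_mem_left _ m2)) (I.mul_mem_left _ m3)

set_option maxHeartbeats 2000000 in
/-- The class group element of order `4 * k`. -/
theorem exists_order {K : Type} [Field K] [NumberField K] {D t : ℤ} {q k : ℕ} (hq : q.Prime)
    (hq5 : 5 ≤ q) (hk : 1 ≤ k) (ht0 : 0 < t) (htq : t ≤ q ^ k)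
    (hD : t ^ 2 + D = 2 * (q : ℤ) ^ (2 * k)) (hsq : Squarefree D)
    {x : K} (hx : x * x = ((-D : ℤ) : K)) (h2 : Module.finrank ℚ K = 2) :
    ∃ g : ClassGroup (𝓞 K), orderOf g = 4 * k := by
  have hqZ : Prime (q : ℤ) := Nat.prime_iff_prime_int.mp hq
  have hq5' : (5 : ℤ) ≤ q := by exact_mod_cast hq5
  have hDq : (q : ℤ) ^ (2 * k) ≤ D := by
    have : t ^ 2 ≤ ((q : ℤ) ^ k) ^ 2 := pow_le_pow_left₀ ht0.le htq 2
    rw [← pow_mul, mul_comm k 2] at this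
    linarith
  have hqq : (q : ℤ) ^ 2 ≤ (q : ℤ) ^ (2 * k) := pow_le_pow_right₀ (by linarith) (by omega)
  have hD8 : 8 < D := by nlinarith
  have hneg : -D < 0 := by omega
  have hsq' : Squarefree (-D) := fun y hy => hsq y (by rwa [dvd_neg] at hy)
  have hqt : ¬ (q : ℤ) ∣ t := by
    rintro ⟨s, rfl⟩
    have h1 : (q : ℤ) * q ∣ D := by
      have : D = 2 * (q : ℤ) ^ (2 * k) - (q * s) ^ 2 := by linarith
      rw [this]
      apply dvd_sub
      · apply Dvd.dvd.mul_left
        rw [← sq]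
        exact pow_dvd_pow _ (by omega)
      · exact ⟨s ^ 2, by ring⟩
    exact hqZ.not_isUnit (hsq _ h1)
  have hq2 : IsCoprime (2 : ℤ) (q : ℤ) := by
    rw [Int.isCoprime_iff_gcd_eq_one]
    have : Nat.Coprime 2 q := (Nat.coprime_primes Nat.prime_two hq).mpr (by omega)
    simpa [Int.gcd] using this
  have hcop : IsCoprime (2 * t) (q : ℤ) := by
    apply IsCoprime.mul_left hq2
    exact ((Prime.coprime_iff_not_dvd hqZ).mpr hqt).symm
  obtain ⟨u, v, huv⟩ := hcop
  obtain ⟨a₂, b₂, hab₂⟩ : IsCoprime (2 : ℤ) ((q : ℤ) ^ (2 * k)) := hq2.pow_right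
  obtain ⟨X, hXx, hX⟩ := qf_sqrt_int hx
  set α : 𝓞 K := (t : 𝓞 K) + X with hα
  set β : 𝓞 K := (t : 𝓞 K) - X with hβ
  have hαβ : α * β = 2 * (q : 𝓞 K) ^ (2 * k) := by
    have h := congrArg (fun z : ℤ => (z : 𝓞 K)) hD
    push_cast at h hX
    rw [hα, hβ, ← h]
    linear_combination - hX
  have huv' : (u : 𝓞 K) * (α + β) + (v : 𝓞 K) * (q : 𝓞 K) = 1 := by
    have h := congrArg (fun z : ℤ => (z : 𝓞 K)) huv
    push_cast at h
    rw [hα, hβ]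
    linear_combination h
  have hab' : (a₂ : 𝓞 K) * 2 + (b₂ : 𝓞 K) * (q : 𝓞 K) ^ (2 * k) = 1 := by
    have h := congrArg (fun z : ℤ => (z : 𝓞 K)) hab₂
    push_cast at h
    exact h
  have hα2 : α * α = 2 * (t : 𝓞 K) * α - 2 * (q : 𝓞 K) ^ (2 * k) := by
    rw [← hαβ, hβ, hα]; ring
  set 𝔮 : Ideal (𝓞 K) := Ideal.span {(q : 𝓞 K), α} with h𝔮
  set 𝔭 : Ideal (𝓞 K) := Ideal.span {(2 : 𝓞 K), α} with h𝔭
  have hpow : ∀ n, 1 ≤ n → n ≤ 2 * k → 𝔮 ^ n = Ideal.span {(q : 𝓞 K) ^ n, α} := by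
    intro n hn
    induction n, hn using Nat.le_induction with
    | base => intro _; simp [h𝔮]
    | succ n hn ih =>
      intro hle
      rw [pow_succ, ih (by omega)]
      refine idl_pow_step (c := 2 * (q : 𝓞 K) ^ (2 * k - (n + 1))) huv' ?_
      rw [hαβ, mul_assoc, ← pow_add]
      congr 2
      omega
  have hprin : 𝔮 ^ (2 * k) * 𝔭 = Ideal.span {α} := by
    rw [hpow _ (by omega) le_rfl]
    exact idl_last hab' hαβ
  have h𝔭2 : 𝔭 * 𝔭 = Ideal.span {2} := idl_two hab' hα2
  have hNα : Algebra.norm ℤ α = 2 * (q : ℤ) ^ (2 * k) := by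
    have h : ((Algebra.norm ℤ α : ℤ) : ℚ) = Algebra.norm ℚ (algebraMap (𝓞 K) K α) :=
      Algebra.coe_norm_int α
    have h' := qf_norm hneg hx h2 t 1
    have h'' : algebraMap (𝓞 K) K α = ((t : ℚ) : K) + ((1 : ℚ) : K) * x := by
      rw [hα, map_add, map_intCast]
      simp [hXx]
    rw [h'', h'] at h
    rw [← hD]
    have : ((Algebra.norm ℤ α : ℤ) : ℚ) = ((t ^ 2 + D : ℤ) : ℚ) := by rw [h]; push_cast; ring
    exact_mod_cast this
  have hN2 : Algebra.norm ℤ (2 : 𝓞 K) = 4 := by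
    have h : ((Algebra.norm ℤ (2 : 𝓞 K) : ℤ) : ℚ) = Algebra.norm ℚ (algebraMap (𝓞 K) K 2) :=
      Algebra.coe_norm_int 2
    have h' := qf_norm hneg hx h2 2 0
    have h'' : algebraMap (𝓞 K) K 2 = ((2 : ℚ) : K) + ((0 : ℚ) : K) * x := by
      rw [map_ofNat (algebraMap (𝓞 K) K) 2]; simp
    rw [h'', h'] at h
    have : ((Algebra.norm ℤ (2 : 𝓞 K) : ℤ) : ℚ) = ((4 : ℤ) : ℚ) := by rw [h]; push_cast; ring
    exact_mod_cast this
  have hn𝔭 : Ideal.absNorm 𝔭 = 2 := by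
    have h := congrArg Ideal.absNorm h𝔭2
    rw [map_mul, Ideal.absNorm_span_singleton, hN2] at h
    simp at h
    nlinarith
  have hn𝔮 : Ideal.absNorm 𝔮 = q := by
    have h := congrArg Ideal.absNorm hprin
    rw [map_mul, map_pow, Ideal.absNorm_span_singleton, hNα, hn𝔭, Int.natAbs_mul, Int.natAbs_pow] at h
    simp at h
    rw [mul_comm] at h
    have h' := Nat.eq_of_mul_eq_mul_left (by norm_num) h
    exact Nat.pow_left_injective (n := 2 * k) (by omega) h'
  have h𝔭0 : 𝔭 ∈ nonZeroDivisors (Ideal (𝓞 K)) := by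
    rw [mem_nonZeroDivisors_iff_ne_zero]
    intro h; rw [h] at hn𝔭; simp at hn𝔭
  have h𝔮0 : 𝔮 ∈ nonZeroDivisors (Ideal (𝓞 K)) := by
    rw [mem_nonZeroDivisors_iff_ne_zero]
    intro h; rw [h] at hn𝔮; simp at hn𝔮; omega
  -- norm equation for principal ideals
  have hnorm : ∀ (I : Ideal (𝓞 K)), Submodule.IsPrincipal I → ∃ (z : 𝓞 K) (a b : ℤ),
      I = Ideal.span {z} ∧ 2 * (z : K) = a + b * x ∧
        4 * (Ideal.absNorm I : ℤ) = a ^ 2 + D * b ^ 2 := by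
    intro I hI
    obtain ⟨z, hz⟩ := hI
    obtain ⟨a, b, h1, h3, -⟩ := qf_half hneg hsq' hx h2 z
    refine ⟨z, a, b, hz, h1, ?_⟩
    have hz' : I = Ideal.span {z} := hz
    rw [hz', Ideal.absNorm_span_singleton]
    have : 0 ≤ Algebra.norm ℤ z := by nlinarith [sq_nonneg a, sq_nonneg b]
    rw [Int.natAbs_of_nonneg this, h3]; ring
  set g : ClassGroup (𝓞 K) := ClassGroup.mk0 ⟨𝔮, h𝔮0⟩ with hg
  set p : ClassGroup (𝓞 K) := ClassGroup.mk0 ⟨𝔭, h𝔭0⟩ with hp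
  have hp1 : p ≠ 1 := by
    rw [hp, Ne, ClassGroup.mk0_eq_one_iff]
    intro hpr
    obtain ⟨z, a, b, -, -, h⟩ := hnorm 𝔭 hpr
    rw [hn𝔭] at h
    push_cast at h
    have hb : b = 0 := by
      by_contra hb
      have : 1 ≤ b ^ 2 := by have : 0 < b ^ 2 := by positivity
                             omega
      nlinarith [sq_nonneg a]
    rw [hb] at h
    have ha : a ≤ 3 := by nlinarith
    have ha' : -3 ≤ a := by nlinarith
    interval_cases a <;> omega
  have hp2 : p * p = 1 := by
    rw [hp, ← map_mul]
    exact (ClassGroup.mk0_eq_one_iff (mul_mem h𝔭0 h𝔭0)).mpr ⟨2, h𝔭2⟩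
  have hgp : g ^ (2 * k) * p = 1 := by
    rw [hp, hg, ← map_pow, ← map_mul]
    exact (ClassGroup.mk0_eq_one_iff (mul_mem (pow_mem h𝔮0 _) h𝔭0)).mpr ⟨α, hprin⟩
  have hgpow : ∀ n, g ^ n = 1 → Submodule.IsPrincipal (𝔮 ^ n) := by
    intro n hn
    rw [hg, ← map_pow] at hn
    exact (ClassGroup.mk0_eq_one_iff (pow_mem h𝔮0 n)).mp hn
  refine ⟨g, ?_⟩
  have hg4 : g ^ (4 * k) = 1 := by
    have h1 : g ^ (2 * k) = p := by
      rw [← mul_left_inj p, hgp, hp2]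
    rw [show 4 * k = 2 * k + 2 * k by ring, pow_add, h1, hp2]
  have hg2 : g ^ (2 * k) ≠ 1 := by
    intro h; rw [h, one_mul] at hgp; exact hp1 hgp
  obtain ⟨c, hc⟩ := orderOf_dvd_of_pow_eq_one hg4
  set o := orderOf g with ho
  have ho1 : 1 ≤ o := by
    rcases Nat.eq_zero_or_pos o with h | h
    · rw [h] at hc; omega
    · exact h
  have hcodd : ¬ 2 ∣ c := by
    rintro ⟨e, rfl⟩
    apply hg2
    rw [← orderOf_dvd_iff_pow_eq_one]
    exact ⟨e, by linarith⟩
  by_contra hne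
  have hc3 : 3 ≤ c := by
    rcases c with _ | _ | _ | c
    · omega
    · omega
    · omega
    · omega
  have ho3 : 3 * o ≤ 4 * k := by nlinarith
  have ho2 : o + 1 ≤ 2 * k := by omega
  obtain ⟨z, a, b, hz, hzab, hN⟩ := hnorm _ (hgpow o (pow_orderOf_eq_one g))
  rw [map_pow, hn𝔮] at hN
  push_cast at hN
  have hqo : (0 : ℤ) < (q : ℤ) ^ o := by positivity
  have hb : b = 0 := by
    by_contra hb
    have h1 : 1 ≤ b ^ 2 := by have : 0 < b ^ 2 := by positivity
                              omega
    have h3 : (q : ℤ) ^ (o + 1) ≤ (q : ℤ) ^ (2 * k) := pow_le_pow_right₀ (by linarith) ho2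
    rw [pow_succ] at h3
    nlinarith [sq_nonneg a]
  rw [hb] at hN hzab
  have ha2 : (2 : ℤ) ∣ a := by
    have : (2 : ℤ) ∣ a ^ 2 := ⟨2 * (q : ℤ) ^ o, by linarith⟩
    exact Int.prime_two.dvd_of_dvd_pow this
  obtain ⟨a', rfl⟩ := ha2
  have hqa : (q : ℤ) ∣ a' := by
    have h1 : a' ^ 2 = (q : ℤ) ^ o := by linarith
    have : (q : ℤ) ∣ a' ^ 2 := by rw [h1]; exact dvd_pow_self _ (by omega)
    exact hqZ.dvd_of_dvd_pow this
  have hza : z = (a' : 𝓞 K) := by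
    apply RingOfIntegers.coe_injective
    rw [map_intCast]
    have : (2 : K) * z = 2 * a' := by rw [hzab]; push_cast; ring
    exact mul_left_cancel₀ two_ne_zero this
  have hmem : α ∈ Ideal.span {z} := by
    rw [← hz, hpow o ho1 (by omega)]
    exact Ideal.subset_span (by simp)
  rw [Ideal.mem_span_singleton] at hmem
  obtain ⟨w, hw⟩ := hmem
  have htr : Algebra.trace ℤ (𝓞 K) α = 2 * t := by
    have h : ((Algebra.trace ℤ (𝓞 K) α : ℤ) : ℚ) = Algebra.trace ℚ K (algebraMap (𝓞 K) K α) :=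
      Algebra.coe_trace_int α
    have h' := qf_trace hneg hx h2 t 1
    have h'' : algebraMap (𝓞 K) K α = ((t : ℚ) : K) + ((1 : ℚ) : K) * x := by
      rw [hα, map_add, map_intCast]
      simp [hXx]
    rw [h'', h'] at h
    exact_mod_cast h
  have htr2 : Algebra.trace ℤ (𝓞 K) α = a' * Algebra.trace ℤ (𝓞 K) w := by
    rw [hw, hza, ← zsmul_eq_mul, map_zsmul, smul_eq_mul]
  rw [htr] at htr2
  have hdiv : (q : ℤ) ∣ 2 * t := by rw [htr2]; exact hqa.mul_right _
  have : (q : ℤ) ∣ 1 := by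
    rw [← huv]
    exact dvd_add (hdiv.mul_left _) (dvd_mul_left _ _)
  exact hqZ.not_isUnit (isUnit_of_dvd_one this)


theorem count_modEq_le (u r v : ℤ) (hu : 0 ≤ u) (hr : 0 < r) :
    (((Finset.Ioc 0 u).filter (fun t => t ≡ v [ZMOD r])).card : ℝ) ≤ u / r + 1 := by
  have h := Int.Ioc_filter_modEq_card 0 u hr v
  have hr' : (0 : ℝ) < r := by exact_mod_cast hr
  have hrq : (0 : ℚ) < r := by exact_mod_cast hr
  have huq : (0 : ℚ) ≤ u := by exact_mod_cast hu
  have h1 : (((Finset.Ioc 0 u).filter (fun t => t ≡ v [ZMOD r])).card : ℚ) ≤ u / r + 1 := by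
    have h' : (((Finset.Ioc 0 u).filter (fun t => t ≡ v [ZMOD r])).card : ℚ) =
      ((((Finset.Ioc 0 u).filter (fun t => t ≡ v [ZMOD r])).card : ℤ) : ℚ) := by push_cast; rfl
    rw [h', h]
    push_cast
    apply max_le
    · have a1 := Int.floor_le (((u : ℚ) - v) / r)
      have a2 := Int.lt_floor_add_one (((0 : ℚ) - v) / r)
      have : ((u : ℚ) - v) / r = u / r + (0 - v) / r := by field_simp; ring
      push_cast at *
      linarith
    · positivity
  have : ((((Finset.Ioc 0 u).filter (fun t => t ≡ v [ZMOD r])).card : ℚ) : ℝ) ≤ ((u / r + 1 : ℚ) : ℝ) := by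
    exact_mod_cast h1
  push_cast at this
  exact this

theorem count_sq_le (u : ℤ) (hu : 0 ≤ u) (p : ℕ) (hp : p.Prime) (hp2 : p ≠ 2) (hpu : ¬ (p : ℤ) ∣ u) :
    (((Finset.Ioc 0 u).filter (fun t => (p : ℤ) * p ∣ 2 * u ^ 2 - t ^ 2)).card : ℝ)
      ≤ 2 * (u / (p : ℝ) ^ 2 + 1) := by
  have hpZ : Prime (p : ℤ) := Nat.prime_iff_prime_int.mp hp
  have hpos : (0 : ℤ) < (p : ℤ) * p := by have := hp.pos; positivity
  have hp2' : ¬ (p : ℤ) ∣ 2 := by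
    intro h
    have : p ∣ 2 := by exact_mod_cast h
    exact hp2 ((Nat.prime_dvd_prime_iff_eq hp Nat.prime_two).mp this)
  set S := (Finset.Ioc 0 u).filter (fun t => (p : ℤ) * p ∣ 2 * u ^ 2 - t ^ 2) with hS
  rcases S.eq_empty_or_nonempty with h | ⟨t0, ht0⟩
  · rw [h]; have : (0 : ℝ) ≤ u := by exact_mod_cast hu
    simp; positivity
  · have hsub : S ⊆ (Finset.Ioc 0 u).filter (fun t => t ≡ t0 [ZMOD (p * p)]) ∪
        (Finset.Ioc 0 u).filter (fun t => t ≡ -t0 [ZMOD (p * p)]) := by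
      intro t ht
      rw [hS, Finset.mem_filter] at ht ht0
      have hd : (p : ℤ) * p ∣ (t - t0) * (t + t0) := by
        have := dvd_sub ht0.2 ht.2
        have e : (2 * u ^ 2 - t0 ^ 2) - (2 * u ^ 2 - t ^ 2) = (t - t0) * (t + t0) := by ring
        rwa [e] at this
      have hpt0 : ¬ (p : ℤ) ∣ t0 := by
        intro h
        have h1 : (p : ℤ) ∣ 2 * u ^ 2 := by
          have h3 : (p : ℤ) ∣ 2 * u ^ 2 - t0 ^ 2 := (Dvd.intro _ rfl).trans ht0.2
          have := dvd_add h3 (dvd_pow h two_ne_zero)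
          simpa using this
        rcases hpZ.dvd_or_dvd h1 with h | h
        · exact hp2' h
        · exact hpu (hpZ.dvd_of_dvd_pow h)
      have hnot : ¬ ((p : ℤ) ∣ t - t0 ∧ (p : ℤ) ∣ t + t0) := by
        rintro ⟨h1, h2⟩
        have h3 := dvd_sub h2 h1
        have e : t + t0 - (t - t0) = 2 * t0 := by ring
        rw [e] at h3
        rcases hpZ.dvd_or_dvd h3 with h | h
        · exact hp2' h
        · exact hpt0 h
      rw [Finset.mem_union, Finset.mem_filter, Finset.mem_filter]
      have key : (p : ℤ) * p ∣ t - t0 ∨ (p : ℤ) * p ∣ t + t0 := by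
        by_cases h1 : (p : ℤ) ∣ t - t0
        · left
          have h2 : ¬ (p : ℤ) ∣ t + t0 := fun h => hnot ⟨h1, h⟩
          have hc : IsCoprime ((p : ℤ) * p) (t + t0) := by
            have := (Prime.coprime_iff_not_dvd hpZ).mpr h2
            exact this.mul_left this
          exact hc.dvd_of_dvd_mul_right hd
        · right
          have hc : IsCoprime ((p : ℤ) * p) (t - t0) := by
            have := (Prime.coprime_iff_not_dvd hpZ).mpr h1
            exact this.mul_left this
          exact hc.dvd_of_dvd_mul_left hd
      rcases key with h | h
      · left; exact ⟨ht.1, (Int.modEq_iff_dvd.mpr h).symm⟩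
      · right; refine ⟨ht.1, (Int.modEq_iff_dvd.mpr ?_).symm⟩
        rwa [sub_neg_eq_add]
    have h1 := count_modEq_le u (p * p) t0 hu hpos
    have h2 := count_modEq_le u (p * p) (-t0) hu hpos
    have h3 : (S.card : ℝ) ≤ (((Finset.Ioc 0 u).filter (fun t => t ≡ t0 [ZMOD (p * p)])).card : ℝ) +
        (((Finset.Ioc 0 u).filter (fun t => t ≡ -t0 [ZMOD (p * p)])).card : ℝ) := by
      exact_mod_cast (Finset.card_le_card hsub).trans (Finset.card_union_le _ _)
    push_cast at h1 h2
    rw [sq]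
    linarith

theorem sum_inv_sq_le (N : ℕ) : ∑ n ∈ Finset.Ico 3 (N + 3), (1 : ℝ) / (n : ℝ) ^ 2 ≤ 2 / 5 := by
  have : ∑ n ∈ Finset.Ico 3 (N + 3), (1 : ℝ) / (n : ℝ) ^ 2 ≤ 2 / 5 - 1 / ((N : ℝ) + 5 / 2) := by
    induction N with
    | zero => norm_num
    | succ N ih =>
      rw [show N + 1 + 3 = (N + 3) + 1 by ring, Finset.sum_Ico_succ_top (by omega)]
      have : (1 : ℝ) / ((N + 3 : ℕ) : ℝ) ^ 2 ≤ 1 / ((N : ℝ) + 5 / 2) - 1 / ((N : ℝ) + 1 + 5 / 2) := by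
        have hN : (0 : ℝ) ≤ N := Nat.cast_nonneg N
        rw [div_sub_div _ _ (by positivity) (by positivity), div_le_div_iff₀ (by positivity) (by positivity)]
        push_cast
        nlinarith
      push_cast at *
      linarith
  have h2 : (0 : ℝ) ≤ 1 / ((N : ℝ) + 5 / 2) := by positivity
  linarith

theorem sieve_count {q k : ℕ} (hq : q.Prime) (hq20 : 20 ≤ q) (hk : 1 ≤ k)
    (hpi : ((2 * q ^ k).primeCounting : ℝ) ≤ (q : ℝ) ^ k / 40) :
    ∃ G : Finset ℤ, (∀ t ∈ G, 0 < t ∧ t ≤ (q : ℤ) ^ k ∧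
      Squarefree (2 * ((q : ℤ) ^ k) ^ 2 - t ^ 2)) ∧ (q : ℝ) ^ k / 10 ≤ (G.card : ℝ) := by
  classical
  set u : ℤ := (q : ℤ) ^ k with hu
  have hqpos := hq.pos
  have hu0 : 0 < u := by positivity
  have huR : ((u : ℤ) : ℝ) = (q : ℝ) ^ k := by rw [hu]; push_cast; rfl
  have huN : u.toNat = q ^ k := by rw [hu]; exact_mod_cast Int.toNat_natCast (q ^ k)
  have hqZ : Prime (q : ℤ) := Nat.prime_iff_prime_int.mp hq
  have hodd : ¬ (2 : ℤ) ∣ u := by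
    intro h
    have h1 : (2 : ℤ) ∣ q := Int.prime_two.dvd_of_dvd_pow h
    have h2 : 2 ∣ q := by exact_mod_cast h1
    have := (Nat.prime_dvd_prime_iff_eq Nat.prime_two hq).mp h2
    omega
  set P := (Nat.primesLE (2 * q ^ k)).filter (fun p => p ≠ 2 ∧ p ≠ q) with hP
  set G := (Finset.Ioc (0 : ℤ) u).filter (fun t => Squarefree (2 * u ^ 2 - t ^ 2)) with hG
  set S : ℕ → Finset ℤ := fun p => (Finset.Ioc 0 u).filter (fun t => (p : ℤ) * p ∣ 2 * u ^ 2 - t ^ 2) with hS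
  set Z := (Finset.Ioc 0 u).filter (fun t => t ≡ 0 [ZMOD q]) with hZ
  have hcover : Finset.Ioc 0 u ⊆ G ∪ (Z ∪ P.biUnion S) := by
    intro t ht
    rw [Finset.mem_union, Finset.mem_union]
    by_cases hsq : Squarefree (2 * u ^ 2 - t ^ 2)
    · left; rw [hG, Finset.mem_filter]; exact ⟨ht, hsq⟩
    right
    rw [← Int.squarefree_natAbs, Nat.squarefree_iff_prime_squarefree] at hsq
    push Not at hsq
    obtain ⟨p, hp, hdvd⟩ := hsq
    have hdvd' : (p : ℤ) * p ∣ 2 * u ^ 2 - t ^ 2 := by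
      rw [← Int.dvd_natAbs]; exact_mod_cast hdvd
    have ht' := Finset.mem_Ioc.mp ht
    have hp2 : p ≠ 2 := by
      rintro rfl
      have h4 : (4 : ℤ) ∣ 2 * u ^ 2 - t ^ 2 := by simpa using hdvd'
      obtain ⟨w, hw⟩ : ∃ w, u = 2 * w + 1 := ⟨u / 2, by omega⟩
      rcases Int.even_or_odd' t with ⟨s, hs | hs⟩
      · rw [hw, hs] at h4
        have e : 2 * (2 * w + 1) ^ 2 - (2 * s) ^ 2 = 4 * (2 * w ^ 2 + 2 * w - s ^ 2) + 2 := by ring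
        rw [e] at h4; omega
      · rw [hw, hs] at h4
        have e : 2 * (2 * w + 1) ^ 2 - (2 * s + 1) ^ 2 = 4 * (2 * w ^ 2 + 2 * w - s ^ 2 - s) + 1 := by ring
        rw [e] at h4; omega
    by_cases hpq : p = q
    · left
      rw [hZ, Finset.mem_filter]
      refine ⟨ht, Int.modEq_zero_iff_dvd.mpr ?_⟩
      rw [hpq] at hdvd'
      have h1 : (q : ℤ) ∣ 2 * u ^ 2 - t ^ 2 := (Dvd.intro _ rfl).trans hdvd'
      have h2 : (q : ℤ) ∣ 2 * u ^ 2 := by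
        apply Dvd.dvd.mul_left
        apply dvd_pow _ two_ne_zero
        exact dvd_pow_self _ (by omega)
      have h3 := dvd_sub h2 h1
      rw [sub_sub_cancel] at h3
      exact hqZ.dvd_of_dvd_pow h3
    · right
      rw [Finset.mem_biUnion]
      refine ⟨p, ?_, ?_⟩
      · rw [hP, Finset.mem_filter, Nat.mem_primesLE]
        refine ⟨⟨?_, hp⟩, hp2, hpq⟩
        have hpos : 0 < 2 * u ^ 2 - t ^ 2 := by nlinarith
        have hle := Int.le_of_dvd hpos hdvd'
        have : (p : ℤ) ≤ 2 * u := by nlinarith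
        rw [hu] at this
        exact_mod_cast this
      · rw [hS, Finset.mem_filter]; exact ⟨ht, hdvd'⟩
  have hc1 := (Finset.card_le_card hcover).trans (Finset.card_union_le _ _)
  have hc2 := Finset.card_union_le Z (P.biUnion S)
  have hc3 : (P.biUnion S).card ≤ ∑ p ∈ P, (S p).card := Finset.card_biUnion_le
  have hcard : (Finset.Ioc 0 u).card = q ^ k := by rw [Int.card_Ioc, sub_zero, huN]
  have hZc : (Z.card : ℝ) ≤ (q : ℝ) ^ k / 20 := by
    have e : Z.card = (q ^ k) / q := by
      have h1 : (Z.card : ℤ) = max (⌊((u : ℚ) - (0 : ℤ)) / (q : ℤ)⌋ - ⌊(((0 : ℤ) : ℚ) - (0 : ℤ)) / (q : ℤ)⌋) 0 :=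
        Int.Ioc_filter_modEq_card 0 u (by exact_mod_cast hqpos) 0
      have h2 : ⌊(u : ℚ) / (q : ℤ)⌋ = u / (q : ℤ) := by exact_mod_cast Rat.floor_intCast_div_natCast u q
      simp only [Int.cast_zero, sub_zero, zero_div, Int.floor_zero, h2] at h1
      rw [max_eq_left (Int.ediv_nonneg hu0.le (by positivity)), hu] at h1
      exact_mod_cast h1
    rw [e]
    have h1 : (((q ^ k) / q : ℕ) : ℝ) ≤ ((q ^ k : ℕ) : ℝ) / q := Nat.cast_div_le
    have h2 : ((q ^ k : ℕ) : ℝ) / q ≤ (q : ℝ) ^ k / 20 := by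
      push_cast
      have : (20 : ℝ) ≤ q := by exact_mod_cast hq20
      gcongr
    linarith
  have hSc : ∑ p ∈ P, ((S p).card : ℝ) ≤ (q : ℝ) ^ k * (4 / 5) + (q : ℝ) ^ k / 20 := by
    have s1 : ∑ p ∈ P, ((S p).card : ℝ) ≤ ∑ p ∈ P, 2 * ((q : ℝ) ^ k / (p : ℝ) ^ 2 + 1) := by
      apply Finset.sum_le_sum
      intro p hp
      rw [hP, Finset.mem_filter, Nat.mem_primesLE] at hp
      have := count_sq_le u hu0.le p hp.1.2 hp.2.1 (by
        intro h
        have h1 : (p : ℤ) ∣ q := (Nat.prime_iff_prime_int.mp hp.1.2).dvd_of_dvd_pow h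
        have h2 : p ∣ q := by exact_mod_cast h1
        exact hp.2.2 ((Nat.prime_dvd_prime_iff_eq hp.1.2 hq).mp h2))
      rw [huR] at this
      exact this
    have s2 : ∑ p ∈ P, 2 * ((q : ℝ) ^ k / (p : ℝ) ^ 2 + 1) =
        2 * (q : ℝ) ^ k * ∑ p ∈ P, 1 / (p : ℝ) ^ 2 + 2 * P.card := by
      rw [Finset.mul_sum, Finset.card_eq_sum_ones]
      push_cast
      rw [Finset.mul_sum, ← Finset.sum_add_distrib]
      apply Finset.sum_congr rfl
      intros; ring
    have s3 : ∑ p ∈ P, 1 / (p : ℝ) ^ 2 ≤ 2 / 5 := by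
      refine le_trans ?_ (sum_inv_sq_le (2 * q ^ k))
      apply Finset.sum_le_sum_of_subset_of_nonneg
      · intro p hp
        rw [hP, Finset.mem_filter, Nat.mem_primesLE] at hp
        rw [Finset.mem_Ico]
        have := hp.1.2.two_le
        have := hp.2.1
        have := hp.1.1
        omega
      · intros; positivity
    have s4 : (P.card : ℝ) ≤ (q : ℝ) ^ k / 40 := by
      refine le_trans ?_ hpi
      have : P.card ≤ (2 * q ^ k).primeCounting := by
        rw [← Nat.primesLE_card_eq_primeCounting]
        exact Finset.card_filter_le _ _
      exact_mod_cast this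
    have hqk : (0 : ℝ) ≤ (q : ℝ) ^ k := by positivity
    rw [s2] at s1
    nlinarith
  have hfin : ((q ^ k : ℕ) : ℝ) ≤ G.card + (Z.card + ∑ p ∈ P, ((S p).card : ℝ)) := by
    rw [← hcard]
    have : (Finset.Ioc 0 u).card ≤ G.card + (Z.card + ∑ p ∈ P, (S p).card) := by omega
    exact_mod_cast this
  push_cast at hfin
  refine ⟨G, ?_, by linarith⟩
  intro t ht
  rw [hG, Finset.mem_filter, Finset.mem_Ioc] at ht
  exact ⟨ht.1.1, ht.1.2, ht.2⟩


theorem divisor_bound (η : ℝ) (hη : 0 < η) :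
    ∃ C : ℝ, 0 < C ∧ ∀ n : ℕ, n ≠ 0 → (n.divisors.card : ℝ) ≤ C * (n : ℝ) ^ η := by
  have hlog : 0 < Real.log 2 := Real.log_pos (by norm_num)
  set C1 : ℝ := 1 + 1 / (η * Real.log 2) with hC1
  have hC1' : 1 ≤ C1 := by rw [hC1]; have : 0 < 1 / (η * Real.log 2) := by positivity
                           linarith
  obtain ⟨P0, hP0⟩ := exists_nat_ge ((2 : ℝ) ^ (1 / η))
  refine ⟨C1 ^ P0, by positivity, ?_⟩
  intro n hn
  -- local bounds
  have loc1 : ∀ (p e : ℕ), 2 ≤ p → ((e : ℝ) + 1) ≤ C1 * ((p : ℝ) ^ e) ^ η := by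
    intro p e hp
    have hp' : (2 : ℝ) ≤ p := by exact_mod_cast hp
    have h1 : ((2 : ℝ) ^ e) ^ η ≤ ((p : ℝ) ^ e) ^ η := by gcongr
    have h2 : 1 + (e : ℝ) * (η * Real.log 2) ≤ ((2 : ℝ) ^ e) ^ η := by
      have : ((2 : ℝ) ^ e) ^ η = Real.exp ((e : ℝ) * (η * Real.log 2)) := by
        rw [Real.rpow_def_of_pos (by positivity), Real.log_pow]
        congr 1; ring
      rw [this]
      linarith [Real.add_one_le_exp ((e : ℝ) * (η * Real.log 2))]
    have h3 : (e : ℝ) + 1 ≤ C1 * (1 + (e : ℝ) * (η * Real.log 2)) := by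
      have hx : 0 < η * Real.log 2 := by positivity
      have : C1 * (1 + (e : ℝ) * (η * Real.log 2)) =
          1 + (e : ℝ) * (η * Real.log 2) + 1 / (η * Real.log 2) + e := by
        rw [hC1]; field_simp; ring
      rw [this]
      have : 0 < 1 / (η * Real.log 2) := by positivity
      have : 0 ≤ (e : ℝ) * (η * Real.log 2) := by positivity
      linarith
    calc (e : ℝ) + 1 ≤ C1 * (1 + (e : ℝ) * (η * Real.log 2)) := h3
      _ ≤ C1 * ((p : ℝ) ^ e) ^ η := by gcongr; linarith
  have loc2 : ∀ (p e : ℕ), P0 ≤ p → ((e : ℝ) + 1) ≤ 1 * ((p : ℝ) ^ e) ^ η := by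
    intro p e hp
    have hp' : (2 : ℝ) ^ (1 / η) ≤ p := hP0.trans (by exact_mod_cast hp)
    have h1 : (2 : ℝ) ≤ (p : ℝ) ^ η := by
      have := Real.rpow_le_rpow (by positivity) hp' hη.le
      rwa [← Real.rpow_mul (by norm_num), one_div_mul_cancel hη.ne', Real.rpow_one] at this
    have h2 : ((p : ℝ) ^ e) ^ η = ((p : ℝ) ^ η) ^ e := by
      rw [← Real.rpow_natCast, ← Real.rpow_mul (by positivity), mul_comm, Real.rpow_mul (by positivity),
        Real.rpow_natCast]
    rw [h2, one_mul]
    have h3 : ((e : ℝ) + 1) ≤ 2 ^ e := by exact_mod_cast Nat.lt_two_pow_self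
    exact h3.trans (by gcongr)
  set c : ℕ → ℝ := fun p => if p < P0 then C1 else 1 with hc
  have hn' : (n : ℝ) ^ η = ∏ p ∈ n.primeFactors, ((p : ℝ) ^ (n.factorization p)) ^ η := by
    rw [Real.finsetProd_rpow _ _ (by intros; positivity)]
    congr 1
    conv_lhs => rw [← Nat.prod_factorization_pow_eq_self hn]
    simp [Finsupp.prod]
  rw [Nat.card_divisors hn, hn']
  push_cast
  calc ∏ p ∈ n.primeFactors, ((n.factorization p : ℝ) + 1)
      ≤ ∏ p ∈ n.primeFactors, (c p * ((p : ℝ) ^ (n.factorization p)) ^ η) := by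
        apply Finset.prod_le_prod
        · intros; positivity
        · intro p hp
          by_cases h : p < P0
          · simp only [hc, h, if_true]
            exact loc1 p _ (Nat.prime_of_mem_primeFactors hp).two_le
          · simp only [hc, h, if_false]
            exact loc2 p _ (by omega)
    _ = (∏ p ∈ n.primeFactors, c p) * ∏ p ∈ n.primeFactors, ((p : ℝ) ^ (n.factorization p)) ^ η :=
        Finset.prod_mul_distrib
    _ ≤ C1 ^ P0 * ∏ p ∈ n.primeFactors, ((p : ℝ) ^ (n.factorization p)) ^ η := by
        gcongr
        rw [hc, Finset.prod_ite, Finset.prod_const, Finset.prod_const_one, mul_one]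
        apply pow_le_pow_right₀ hC1'
        calc _ ≤ (Finset.range P0).card := Finset.card_le_card (by
              intro p hp; rw [Finset.mem_filter] at hp; exact Finset.mem_range.mpr hp.2)
          _ = P0 := Finset.card_range P0

theorem union_bound {ι : Type} [DecidableEq ι] (Q : Finset ι) (S : ι → Finset ℤ) (B E : ℝ) (M : ℕ)
    (hM : Q.card ≤ M) (hE : 0 ≤ E) (hB : ∀ q ∈ Q, B ≤ (S q).card)
    (hinter : ∀ q ∈ Q, ∀ q' ∈ Q, q ≠ q' → ((S q ∩ S q').card : ℝ) ≤ E) :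
    (Q.card : ℝ) * (B - M * E) ≤ (Q.biUnion S).card := by
  induction Q using Finset.induction_on with
  | empty => simp
  | insert a Q ha ih =>
    rw [Finset.card_insert_of_notMem ha] at hM ⊢
    have ih' := ih (by omega) (fun q hq => hB q (Finset.mem_insert_of_mem hq))
      (fun q hq q' hq' => hinter q (Finset.mem_insert_of_mem hq) q' (Finset.mem_insert_of_mem hq'))
    rw [Finset.biUnion_insert]
    have h1 := Finset.card_union_add_card_inter (S a) (Q.biUnion S)
    have h1' : ((S a ∪ Q.biUnion S).card : ℝ) + ((S a ∩ Q.biUnion S).card : ℝ) =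
      (S a).card + (Q.biUnion S).card := by exact_mod_cast h1
    have h2 : ((S a ∩ Q.biUnion S).card : ℝ) ≤ M * E := by
      rw [Finset.inter_biUnion]
      calc ((Q.biUnion fun x => S a ∩ S x).card : ℝ) ≤ ((∑ x ∈ Q, (S a ∩ S x).card : ℕ) : ℝ) := by
            exact_mod_cast Finset.card_biUnion_le
        _ ≤ ∑ x ∈ Q, E := by
            push_cast
            apply Finset.sum_le_sum
            intro x hx
            exact hinter a (Finset.mem_insert_self _ _) x (Finset.mem_insert_of_mem hx)
              (by rintro rfl; exact ha hx)
        _ = Q.card * E := by simp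
        _ ≤ M * E := by
            gcongr; omega
    have h3 := hB a (Finset.mem_insert_self _ _)
    push_cast
    linarith

theorem inter_bound {u v : ℤ} (hv : 0 < v) (huv : v < u) (G H : Finset ℤ)
    (hG : ∀ t ∈ G, 0 < t) (hH : ∀ t ∈ H, 0 < t) :
    ((G.image (fun t => 2 * u ^ 2 - t ^ 2)) ∩ (H.image (fun t => 2 * v ^ 2 - t ^ 2))).card
      ≤ (2 * (u ^ 2 - v ^ 2)).toNat.divisors.card := by
  classical
  have hpos : 0 < 2 * (u ^ 2 - v ^ 2) := by nlinarith
  set n := (2 * (u ^ 2 - v ^ 2)).toNat with hn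
  have hn' : (n : ℤ) = 2 * (u ^ 2 - v ^ 2) := Int.toNat_of_nonneg hpos.le
  have key : (G.image (fun t => 2 * u ^ 2 - t ^ 2)) ∩ (H.image (fun t => 2 * v ^ 2 - t ^ 2)) ⊆
      n.divisors.image (fun e : ℕ => 2 * u ^ 2 - (((n : ℤ) / e + e) / 2) ^ 2) := by
    intro D hD
    rw [Finset.mem_inter, Finset.mem_image, Finset.mem_image] at hD
    obtain ⟨⟨t, ht, hDt⟩, ⟨s, hs, hDs⟩⟩ := hD
    have ht0 := hG t ht
    have hs0 := hH s hs
    have heq : (t - s) * (t + s) = n := by rw [hn']; linarith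
    have hts : 0 < t - s := by
      by_contra h
      have : 0 < (n : ℤ) := by rw [hn']; exact hpos
      nlinarith
    rw [Finset.mem_image]
    refine ⟨(t - s).toNat, ?_, ?_⟩
    · rw [Nat.mem_divisors]
      refine ⟨?_, by omega⟩
      have : ((t - s).toNat : ℤ) ∣ n := by
        rw [Int.toNat_of_nonneg hts.le]; exact ⟨t + s, heq.symm⟩
      exact_mod_cast this
    · rw [← hDt, Int.toNat_of_nonneg hts.le, ← heq, Int.mul_ediv_cancel_left _ hts.ne']
      have : (t + s + (t - s)) / 2 = t := by omega
      simp only [this]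
  exact (Finset.card_le_card key).trans Finset.card_image_le


theorem prime_lower (δ : ℝ) (hδ : 0 < δ) (hδ1 : δ < 1) :
    ∀ᶠ A : ℝ in Filter.atTop, 2 * A ^ (1 - δ) ≤ (⌊A⌋₊.primeCounting : ℝ) := by
  have h1 := (isLittleO_log_rpow_atTop hδ).bound (show (0 : ℝ) < 1 / 8 by norm_num)
  filter_upwards [h1, Filter.eventually_ge_atTop (8 : ℝ)] with A hA hA8
  have hlogpos : 0 < Real.log A := Real.log_pos (by linarith)
  rw [Real.norm_of_nonneg hlogpos.le, Real.norm_of_nonneg (by positivity)] at hA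
  have hpi := Chebyshev.pi_ge' (x := A) (by linarith)
  refine le_trans ?_ hpi
  rw [le_div_iff₀ hlogpos]
  have hl2 : 0.69 < Real.log 2 := by have := Real.log_two_gt_d9; linarith
  have hAδ : A ^ δ ≤ A := by
    nth_rw 2 [← Real.rpow_one A]
    exact Real.rpow_le_rpow_of_exponent_le (by linarith) hδ1.le
  have hlog2 : Real.log (A + 2) ≤ A / 4 := by
    have : Real.log (A + 2) ≤ Real.log (A ^ 2) := Real.log_le_log (by linarith) (by nlinarith)
    rw [Real.log_pow] at this
    push_cast at this
    linarith
  have hprod : A ^ (1 - δ) * A ^ δ = A := by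
    rw [← Real.rpow_add (by linarith)]; simp
  have hp : 0 < A ^ (1 - δ) := by positivity
  nlinarith

theorem prime_upper :
    ∃ U : ℕ, ∀ u : ℕ, U ≤ u → ((2 * u).primeCounting : ℝ) ≤ (u : ℝ) / 40 := by
  have h1 := Chebyshev.eventually_primeCounting_le (ε := 1) one_pos
  have h2 := Real.tendsto_log_atTop.eventually_ge_atTop (80 * (Real.log 4 + 1))
  obtain ⟨x0, hx0⟩ := Filter.eventually_atTop.mp
    ((h1.and h2).and (Filter.eventually_gt_atTop (1 : ℝ)))
  obtain ⟨U, hU⟩ := exists_nat_ge x0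
  refine ⟨U, fun u hu => ?_⟩
  have hx : x0 ≤ ((2 * u : ℕ) : ℝ) := by
    refine hU.trans ?_
    exact_mod_cast (by omega : U ≤ 2 * u)
  obtain ⟨⟨ha, hb⟩, hc⟩ := hx0 _ hx
  rw [Nat.floor_natCast] at ha
  refine ha.trans ?_
  have hlog : 0 < Real.log ((2 * u : ℕ) : ℝ) := Real.log_pos hc
  rw [div_le_iff₀ hlog]
  push_cast at *
  have : (0 : ℝ) ≤ u := Nat.cast_nonneg u
  nlinarith

theorem many_D (k : ℕ) (hk : 1 ≤ k) (δ : ℝ) (hδ : 0 < δ) (hδ4 : δ ≤ 1 / 4) :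
    ∀ᶠ A : ℝ in Filter.atTop, ∃ F : Finset ℤ,
      A ^ ((1 - 2 * δ) + (1 - δ) * k) / 40 ≤ (F.card : ℝ) ∧
      ∀ D ∈ F, ∃ (q : ℕ) (t : ℤ), q.Prime ∧ 5 ≤ q ∧ (q : ℝ) ≤ A ∧ 0 < t ∧ t ≤ (q : ℤ) ^ k ∧
        t ^ 2 + D = 2 * (q : ℤ) ^ (2 * k) ∧ Squarefree D := by
  classical
  obtain ⟨U, hU⟩ := prime_upper
  have hkR : (1 : ℝ) ≤ k := by exact_mod_cast hk
  set η : ℝ := δ / (4 * k) with hη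
  have hη0 : 0 < η := by positivity
  obtain ⟨C, hC0, hC⟩ := divisor_bound η hη0
  have ev1 := prime_lower δ hδ (by linarith)
  have ev2 := (tendsto_rpow_atTop (show 0 < 1 - δ by linarith)).eventually_ge_atTop (max 20 (U : ℝ))
  have ev3 := (tendsto_rpow_atTop (show 0 < δ / 2 by linarith)).eventually_ge_atTop
    (20 * (C * 2 ^ η))
  have ev4 := (tendsto_rpow_atTop (show 0 < 1 - 2 * δ by linarith)).eventually_ge_atTop 1
  filter_upwards [ev1, ev2, ev3, ev4, Filter.eventually_ge_atTop (1 : ℝ)] with A hA1 hA2 hA3 hA4 hA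
  have hA0 : 0 < A := by linarith
  -- the primes
  set T := (Nat.primesLE ⌊A⌋₊).filter (fun q : ℕ => A ^ (1 - δ) < (q : ℝ)) with hT
  have hTcard : A ^ (1 - δ) ≤ (T.card : ℝ) := by
    have hsub : Nat.primesLE ⌊A⌋₊ ⊆ T ∪ Finset.Ioc 0 ⌊A ^ (1 - δ)⌋₊ := by
      intro q hq
      rw [Finset.mem_union]
      by_cases h : A ^ (1 - δ) < (q : ℝ)
      · left; rw [hT, Finset.mem_filter]; exact ⟨hq, h⟩
      · right
        rw [Finset.mem_Ioc]
        exact ⟨(Nat.mem_primesLE.mp hq).2.pos, Nat.le_floor (not_lt.mp h)⟩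
    have h1 := (Finset.card_le_card hsub).trans (Finset.card_union_le _ _)
    rw [Nat.primesLE_card_eq_primeCounting, Nat.card_Ioc] at h1
    have h2 : ((⌊A⌋₊.primeCounting : ℕ) : ℝ) ≤ T.card + (⌊A ^ (1 - δ)⌋₊ : ℝ) := by exact_mod_cast h1
    have h3 : (⌊A ^ (1 - δ)⌋₊ : ℝ) ≤ A ^ (1 - δ) := Nat.floor_le (by positivity)
    linarith
  set M := ⌊A ^ (1 - 2 * δ)⌋₊ with hM
  have hM1 : (M : ℝ) ≤ A ^ (1 - 2 * δ) := Nat.floor_le (by positivity)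
  have hM2 : A ^ (1 - 2 * δ) / 2 ≤ (M : ℝ) := by
    have h1 : A ^ (1 - 2 * δ) < M + 1 := Nat.lt_floor_add_one _
    have h2 : (1 : ℝ) ≤ M := by
      have : 1 ≤ M := Nat.le_floor (by simpa using hA4)
      exact_mod_cast this
    linarith
  have hMT : M ≤ T.card := by
    have h1 : A ^ (1 - 2 * δ) ≤ A ^ (1 - δ) := Real.rpow_le_rpow_of_exponent_le hA (by linarith)
    have : (M : ℝ) ≤ T.card := by linarith
    exact_mod_cast this
  obtain ⟨Q, hQT, hQc⟩ := Finset.exists_subset_card_eq hMT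
  have hQ : ∀ q ∈ Q, q.Prime ∧ (q : ℝ) ≤ A ∧ A ^ (1 - δ) < (q : ℝ) := by
    intro q hq
    have := hQT hq
    rw [hT, Finset.mem_filter, Nat.mem_primesLE] at this
    exact ⟨this.1.2, (Nat.le_floor_iff hA0.le).mp this.1.1, this.2⟩
  have hQ20 : ∀ q ∈ Q, 20 ≤ q ∧ U ≤ q := by
    intro q hq
    have h := (hQ q hq).2.2
    constructor
    · have : (20 : ℝ) ≤ q := (le_max_left _ _).trans (hA2.trans h.le)
      exact_mod_cast this
    · have : (U : ℝ) ≤ q := (le_max_right _ _).trans (hA2.trans h.le)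
      exact_mod_cast this
  have hex : ∀ q : ℕ, ∃ G : Finset ℤ, q ∈ Q → (∀ t ∈ G, 0 < t ∧ t ≤ (q : ℤ) ^ k ∧
      Squarefree (2 * ((q : ℤ) ^ k) ^ 2 - t ^ 2)) ∧ (q : ℝ) ^ k / 10 ≤ (G.card : ℝ) := by
    intro q
    by_cases hq : q ∈ Q
    · obtain ⟨G, hG⟩ := sieve_count (hQ q hq).1 (hQ20 q hq).1 hk (by
        have h1 : U ≤ q ^ k := (hQ20 q hq).2.trans (Nat.le_self_pow (by omega) q)
        have := hU (q ^ k) h1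
        push_cast at this
        exact this)
      exact ⟨G, fun _ => hG⟩
    · exact ⟨∅, fun h => absurd h hq⟩
  choose G hG using hex
  set S : ℕ → Finset ℤ := fun q => (G q).image (fun t => 2 * ((q : ℤ) ^ k) ^ 2 - t ^ 2) with hS
  set B : ℝ := A ^ ((1 - δ) * k) / 10 with hB
  set E : ℝ := C * (2 * A ^ (2 * k)) ^ η with hE
  have hE0 : 0 ≤ E := by positivity
  have hBS : ∀ q ∈ Q, B ≤ (S q).card := by
    intro q hq
    have hinj : Set.InjOn (fun t : ℤ => 2 * ((q : ℤ) ^ k) ^ 2 - t ^ 2) (G q) := by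
      intro t ht s hs hts
      have ht0 := ((hG q hq).1 t ht).1
      have hs0 := ((hG q hq).1 s hs).1
      have : t ^ 2 = s ^ 2 := by simpa using hts
      exact (pow_left_inj₀ ht0.le hs0.le two_ne_zero).mp this
    rw [hS, Finset.card_image_of_injOn hinj]
    refine le_trans ?_ (hG q hq).2
    rw [hB, Real.rpow_mul hA0.le, Real.rpow_natCast]
    have := (hQ q hq).2.2.le
    gcongr
  have hlt : ∀ q ∈ Q, ∀ q' ∈ Q, q' < q → ((S q ∩ S q').card : ℝ) ≤ E := by
    intro q hq q' hq' hlt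
    have hq'0 := (hQ q' hq').1.pos
    have hpow : (q' : ℤ) ^ k < (q : ℤ) ^ k :=
      pow_lt_pow_left₀ (by exact_mod_cast hlt) (by positivity) (by omega)
    have h1 := inter_bound (u := (q : ℤ) ^ k) (v := (q' : ℤ) ^ k) (by positivity) hpow (G q) (G q')
      (fun t ht => ((hG q hq).1 t ht).1) (fun t ht => ((hG q' hq').1 t ht).1)
    set n := (2 * (((q : ℤ) ^ k) ^ 2 - ((q' : ℤ) ^ k) ^ 2)).toNat with hn
    have hpos : 0 < 2 * (((q : ℤ) ^ k) ^ 2 - ((q' : ℤ) ^ k) ^ 2) := by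
      have : 0 < (q' : ℤ) ^ k := by positivity
      nlinarith
    have hnZ : (n : ℤ) = 2 * (((q : ℤ) ^ k) ^ 2 - ((q' : ℤ) ^ k) ^ 2) := Int.toNat_of_nonneg hpos.le
    have hnR : (n : ℝ) ≤ 2 * A ^ (2 * k) := by
      have h3 : (n : ℝ) = 2 * (((q : ℝ) ^ k) ^ 2 - ((q' : ℝ) ^ k) ^ 2) := by exact_mod_cast hnZ
      rw [h3]
      have h4 : ((q : ℝ) ^ k) ^ 2 ≤ A ^ (2 * k) := by
        rw [← pow_mul, mul_comm k 2]
        have := (hQ q hq).2.1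
        gcongr
      have : 0 ≤ ((q' : ℝ) ^ k) ^ 2 := by positivity
      linarith
    calc ((S q ∩ S q').card : ℝ) ≤ (n.divisors.card : ℝ) := by exact_mod_cast h1
      _ ≤ C * (n : ℝ) ^ η := hC n (by omega)
      _ ≤ E := by rw [hE]; gcongr
  have hinter : ∀ q ∈ Q, ∀ q' ∈ Q, q ≠ q' → ((S q ∩ S q').card : ℝ) ≤ E := by
    intro q hq q' hq' hne
    rcases lt_or_gt_of_ne hne with h | h
    · rw [Finset.inter_comm]; exact hlt q' hq' q hq h
    · exact hlt q hq q' hq' h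
  have hub := union_bound Q S B E M hQc.le hE0 hBS hinter
  rw [hQc] at hub
  refine ⟨Q.biUnion S, ?_, ?_⟩
  · refine le_trans ?_ hub
    have hEle : E = C * 2 ^ η * A ^ (δ / 2) := by
      rw [hE, Real.mul_rpow (by norm_num) (by positivity), ← Real.rpow_natCast, ← Real.rpow_mul hA0.le, mul_assoc]
      congr 3
      rw [hη]; push_cast; field_simp; ring
    have hME : M * E ≤ B / 2 := by
      have h1 : M * E ≤ A ^ (1 - 2 * δ) * (C * 2 ^ η * A ^ (δ / 2)) := by
        rw [hEle]; gcongr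
      have h2 : A ^ (1 - 2 * δ) * (C * 2 ^ η * A ^ (δ / 2)) ≤
          A ^ (1 - 2 * δ) * (A ^ (δ / 2) / 20 * A ^ (δ / 2)) := by
        gcongr
        linarith
      have h3 : A ^ (1 - 2 * δ) * (A ^ (δ / 2) / 20 * A ^ (δ / 2)) = A ^ (1 - δ) / 20 := by
        have : A ^ (1 - δ) = A ^ (1 - 2 * δ) * (A ^ (δ / 2) * A ^ (δ / 2)) := by
          rw [← Real.rpow_add hA0, ← Real.rpow_add hA0]; congr 1; ring
        rw [this]; ring
      have h4 : A ^ (1 - δ) ≤ A ^ ((1 - δ) * k) :=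
        Real.rpow_le_rpow_of_exponent_le hA (by nlinarith)
      rw [hB]
      linarith
    have hB0 : 0 ≤ B := by positivity
    calc A ^ ((1 - 2 * δ) + (1 - δ) * k) / 40 = (A ^ (1 - 2 * δ) / 2) * (B / 2) := by
          rw [Real.rpow_add hA0, hB]; ring
      _ ≤ M * (B - M * E) := by
          apply mul_le_mul hM2 (by linarith) (by linarith) (by positivity)
  · intro D hD
    rw [Finset.mem_biUnion] at hD
    obtain ⟨q, hq, hD⟩ := hD
    rw [hS, Finset.mem_image] at hD
    obtain ⟨t, ht, rfl⟩ := hD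
    obtain ⟨ht0, htq, hsq⟩ := (hG q hq).1 t ht
    refine ⟨q, t, (hQ q hq).1, by have := (hQ20 q hq).1; omega, (hQ q hq).2.1, ht0, htq, ?_, hsq⟩
    rw [mul_comm 2 k, pow_mul]; ring


theorem exists_quad_field (d : ℤ) (hd : d < 0) :
    ∃ (K : Type) (_ : Field K) (_ : NumberField K),
      (∃ x : K, x * x = (d : K)) ∧ Module.finrank ℚ K = 2 := by
  have : Fact (∀ r : ℚ, r ^ 2 ≠ (d : ℚ) + 0 * r) := ⟨fun r h => by
    have h1 : (d : ℚ) < 0 := by exact_mod_cast hd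
    nlinarith [sq_nonneg r]⟩
  have hfr : Module.finrank ℚ (QuadraticAlgebra ℚ (d : ℚ) 0) = 2 :=
    QuadraticAlgebra.finrank_eq_two _ _
  have hfin : Module.Finite ℚ (QuadraticAlgebra ℚ (d : ℚ) 0) := inferInstance
  have key : (QuadraticAlgebra.instAlgebra : Algebra ℚ (QuadraticAlgebra ℚ (d : ℚ) 0)) =
      DivisionRing.toRatAlgebra := Subsingleton.elim _ _
  refine ⟨QuadraticAlgebra ℚ (d : ℚ) 0, inferInstance,
    @NumberField.mk _ _ inferInstance (by convert hfin), ⟨⟨0, 1⟩, ?_⟩, ?_⟩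
  · ext <;> simp
  · convert hfr

theorem good_finite (m : ℕ) (X : ℝ) : {d : ℤ | GoodOrderM m X d}.Finite := by
  apply (Set.finite_Icc (-⌈4 * X⌉) 0).subset
  rintro d ⟨hd, hsq, h⟩
  obtain ⟨K, i1, i2, ⟨x, hx⟩, h2⟩ := exists_quad_field d hd
  have h3 := (h K ⟨x, hx⟩ h2).1
  have h4 := (qf_discr hd hsq hx h2).2
  refine ⟨?_, hd.le⟩
  have h5 : ((|d| : ℤ) : ℝ) ≤ 4 * X := by
    have : ((|d| : ℤ) : ℝ) ≤ ((4 * |NumberField.discr K| : ℤ) : ℝ) := by exact_mod_cast h4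
    push_cast at this ⊢
    linarith
  have h6 : |d| ≤ ⌈4 * X⌉ := by
    have := h5.trans (Int.le_ceil _)
    exact_mod_cast this
  rw [abs_of_neg hd] at h6
  linarith

/-- Soundararajan: for `m ≡ 0 (mod 4)`, there are `≫ X^(1/2 + 2/m - ε)` imaginary
quadratic fields with `|d_k| ≤ X` whose class group contains an element of order `m`. -/
theorem count_imag_quad_order_m_zero_mod_four (m : ℕ) (hm : 1 < m) (hm4 : m % 4 = 0)
    (ε : ℝ) (hε : 0 < ε) :
    ∃ c : ℝ, 0 < c ∧ ∃ X₀ : ℝ, ∀ X : ℝ, X₀ ≤ X →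
      c * X ^ ((1 : ℝ) / 2 + 2 / (m : ℝ) - ε) ≤ ({d : ℤ | GoodOrderM m X d}.ncard : ℝ) := by
  obtain ⟨k, rfl⟩ : ∃ k, m = 4 * k := ⟨m / 4, by omega⟩
  have hk : 1 ≤ k := by omega
  have hkR : (1 : ℝ) ≤ k := by exact_mod_cast hk
  set δ : ℝ := min (ε / 2) (1 / 4) with hδdef
  have hδ : 0 < δ := lt_min (by linarith) (by norm_num)
  have hδ4 : δ ≤ 1 / 4 := min_le_right _ _
  have hδε : δ ≤ ε / 2 := min_le_left _ _
  set e : ℝ := (1 : ℝ) / 2 + 2 / ((4 * k : ℕ) : ℝ) - ε with he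
  have hpos : (0 : ℝ) < 1 / (2 * k) := by positivity
  have hT : Filter.Tendsto (fun X : ℝ => (X / 8) ^ (1 / (2 * (k : ℝ)))) Filter.atTop Filter.atTop :=
    (tendsto_rpow_atTop hpos).comp (Filter.tendsto_id.atTop_div_const (by norm_num))
  have hev := (hT.eventually (many_D k hk δ hδ hδ4)).and (Filter.eventually_ge_atTop (8 : ℝ))
  obtain ⟨X₀, hX₀⟩ := Filter.eventually_atTop.1 hev
  refine ⟨((8 : ℝ) ^ e)⁻¹ / 40, by positivity, X₀, fun X hX => ?_⟩
  obtain ⟨⟨F, hF, hFD⟩, hX8⟩ := hX₀ X hX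
  set A : ℝ := (X / 8) ^ (1 / (2 * (k : ℝ))) with hA
  have hX1 : 1 ≤ X / 8 := by linarith
  have hX0 : 0 ≤ X / 8 := by linarith
  have hA2 : A ^ (2 * k) = X / 8 := by
    rw [hA, ← Real.rpow_natCast, ← Real.rpow_mul hX0]
    push_cast
    rw [one_div, inv_mul_cancel₀ (by positivity), Real.rpow_one]
  have hsub : ((F.image (fun D => -D) : Finset ℤ) : Set ℤ) ⊆ {d : ℤ | GoodOrderM (4 * k) X d} := by
    intro d hd
    simp only [Finset.coe_image, Set.mem_image, Finset.mem_coe] at hd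
    obtain ⟨D, hDF, rfl⟩ := hd
    obtain ⟨q, t, hq, hq5, hqA, ht0, htq, hD, hsq⟩ := hFD D hDF
    have htq2 : t ^ 2 ≤ (q : ℤ) ^ (2 * k) := by
      have : t ^ 2 ≤ ((q : ℤ) ^ k) ^ 2 := pow_le_pow_left₀ ht0.le htq 2
      rwa [← pow_mul, mul_comm k 2] at this
    have hqpos : (0 : ℤ) < (q : ℤ) ^ (2 * k) := by
      have := hq.pos
      positivity
    have hDpos : 0 < D := by linarith
    have hneg : -D < 0 := by linarith
    have hsqn : Squarefree (-D) := by
      intro y hy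
      exact hsq y ((dvd_neg).1 hy)
    refine ⟨hneg, hsqn, ?_⟩
    intro K _ _ ⟨x, hx⟩ h2
    refine ⟨?_, exists_order hq hq5 hk ht0 htq hD hsq hx h2⟩
    have h1 := (qf_discr hneg hsqn hx h2).1
    rw [abs_neg, abs_of_pos hDpos] at h1
    have h3 : |NumberField.discr K| ≤ 8 * (q : ℤ) ^ (2 * k) := by nlinarith [sq_nonneg t]
    have h4 : ((|NumberField.discr K| : ℤ) : ℝ) ≤ 8 * (q : ℝ) ^ (2 * k) := by exact_mod_cast h3
    have h5 : (q : ℝ) ^ (2 * k) ≤ A ^ (2 * k) := pow_le_pow_left₀ (by positivity) hqA _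
    rw [hA2] at h5
    push_cast at h4
    linarith
  have hcard : F.card ≤ {d : ℤ | GoodOrderM (4 * k) X d}.ncard := by
    have := Set.ncard_le_ncard hsub (good_finite _ _)
    rwa [Set.ncard_coe_finset, Finset.card_image_of_injective _ neg_injective] at this
  have hcardR : (F.card : ℝ) ≤ ({d : ℤ | GoodOrderM (4 * k) X d}.ncard : ℝ) := by
    exact_mod_cast hcard
  refine le_trans ?_ (hF.trans hcardR)
  have hexp : A ^ ((1 - 2 * δ) + (1 - δ) * k)
      = (X / 8) ^ (1 / (2 * (k : ℝ)) * ((1 - 2 * δ) + (1 - δ) * k)) := by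
    rw [hA, ← Real.rpow_mul hX0]
  have hle : e ≤ 1 / (2 * (k : ℝ)) * ((1 - 2 * δ) + (1 - δ) * k) := by
    have h1 : 1 / (2 * (k : ℝ)) * ((1 - 2 * δ) + (1 - δ) * k)
        = 1 / 2 + 2 / (4 * (k : ℝ)) - δ / 2 - δ * (1 / k) := by
      field_simp
      ring
    have h2 : 1 / (k : ℝ) ≤ 1 := by
      rw [div_le_one (by linarith)]
      exact hkR
    have h3 : δ * (1 / k) ≤ δ * 1 := mul_le_mul_of_nonneg_left h2 hδ.le
    rw [h1, he]
    push_cast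
    linarith
  have hfin : (X / 8) ^ e ≤ A ^ ((1 - 2 * δ) + (1 - δ) * k) := by
    rw [hexp]
    exact Real.rpow_le_rpow_of_exponent_le hX1 hle
  have hdiv : (X / 8) ^ e = X ^ e * ((8 : ℝ) ^ e)⁻¹ := by
    rw [Real.div_rpow (by linarith) (by norm_num), div_eq_mul_inv]
  rw [hdiv] at hfin
  linarith
end

section
/- For every integer m > 1, there are infinitely many real quadratic number fields whose class number is divisible by m; that is, the set of squarefree integers d > 1 such that m divides the cardinality of the ideal class group Cl(ℚ(√d)) is infinite. -/
open NumberField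

/-- Powers modulo a prime: a `k`-th power with `gcd (m, q-1) ∣ k` is an `m`-th power. -/
lemma rq_pow_gcd (q : ℕ) [Fact q.Prime] (m k : ℕ) (h : Nat.gcd m (q - 1) ∣ k)
    (w : ZMod q) (hw : w ≠ 0) : ∃ c : ZMod q, c ≠ 0 ∧ c ^ m = w ^ k := by
  obtain ⟨t, rfl⟩ := h
  refine ⟨w ^ (Nat.gcdA m (q - 1) * t : ℤ), zpow_ne_zero _ hw, ?_⟩
  have h1 : (w ^ (q - 1) : ZMod q) = 1 := ZMod.pow_card_sub_one_eq_one hw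
  have h2 : (w ^ (((q - 1 : ℕ) : ℤ)) : ZMod q) = 1 := by rw [zpow_natCast, h1]
  have e : ((Nat.gcd m (q - 1) * t : ℕ) : ℤ)
      = (Nat.gcdA m (q - 1) * t) * m + ((q - 1 : ℕ) : ℤ) * (Nat.gcdB m (q - 1) * t) := by
    push_cast [Nat.gcd_eq_gcd_ab m (q - 1)]
    ring
  rw [← zpow_natCast, ← zpow_natCast, e, zpow_add₀ hw, ← zpow_mul, zpow_mul _ ((q-1 : ℕ) : ℤ), h2,
    one_zpow, mul_one]

lemma rq_two (q : ℕ) [Fact q.Prime] (m : ℕ) (h : Nat.gcd m (q - 1) ∣ 2) (h3 : q % 4 = 3)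
    (hq : 3 < q) :
    (∃ c : ZMod q, c ≠ 0 ∧ ∀ y : ZMod q, y ^ 2 ≠ 1 - c ^ m) ∧
    (∃ c : ZMod q, c ≠ 0 ∧ ∀ y : ZMod q, y ^ 2 ≠ c ^ m - 1) := by
  have hn : ¬ IsSquare (-1 : ZMod q) := by
    rw [ZMod.exists_sq_eq_neg_one_iff]; simpa using h3
  have hp : q.Prime := Fact.out
  have h2 : (2 : ZMod q) ≠ 0 := by
    intro h0
    have : ((2 : ℕ) : ZMod q) = 0 := by exact_mod_cast h0
    rw [ZMod.natCast_eq_zero_iff] at this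
    have := Nat.le_of_dvd (by norm_num) this
    omega
  have h3 : (3 : ZMod q) ≠ 0 := by
    intro h0
    have : ((3 : ℕ) : ZMod q) = 0 := by exact_mod_cast h0
    rw [ZMod.natCast_eq_zero_iff] at this
    have := Nat.le_of_dvd (by norm_num) this
    omega
  obtain ⟨c, hc, hc'⟩ := rq_pow_gcd q m 2 h 2 h2
  obtain ⟨d, hd, hd'⟩ := rq_pow_gcd q m 2 h 2⁻¹ (inv_ne_zero h2)
  constructor
  · by_contra! hcon
    obtain ⟨y, hy⟩ := hcon c hc
    obtain ⟨z, hz⟩ := hcon d hd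
    rw [hc'] at hy
    rw [hd'] at hz
    apply hn
    refine ⟨y * z * 2 / 3, ?_⟩
    have : (y * z * 2 / 3) * (y * z * 2 / 3) = (y ^ 2 * z ^ 2) * 4 / (3 * 3) := by
      field_simp; ring
    rw [this, hy, hz]
    field_simp
    ring
  · by_contra! hcon
    obtain ⟨y, hy⟩ := hcon c hc
    obtain ⟨z, hz⟩ := hcon d hd
    rw [hc'] at hy
    rw [hd'] at hz
    apply hn
    refine ⟨y * z * 2 / 3, ?_⟩
    have : (y * z * 2 / 3) * (y * z * 2 / 3) = (y ^ 2 * z ^ 2) * 4 / (3 * 3) := by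
      field_simp; ring
    rw [this, hy, hz]
    field_simp
    ring

/-- In the prime field with `l ∣ q - 1` not every element is an `l`-th power. -/
lemma rq_exists_not_pow (q : ℕ) [Fact q.Prime] (l : ℕ) (hl : l.Prime) (hlq : l ∣ q - 1) :
    ∃ x : ZMod q, ∀ y : ZMod q, y ^ l ≠ x := by
  by_contra! hcon
  have hsurj : Function.Surjective (fun y : ZMod q => y ^ l) := hcon
  have hinj := Finite.injective_iff_surjective.mpr hsurj
  have : Fact l.Prime := ⟨hl⟩
  have hcard : l ∣ Fintype.card (ZMod q)ˣ := by rwa [ZMod.card_units]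
  obtain ⟨u, hu⟩ := exists_prime_orderOf_dvd_card l hcard
  have h1 : (u : ZMod q) ^ l = 1 := by
    rw [← Units.val_pow_eq_pow_val, ← hu, pow_orderOf_eq_one, Units.val_one]
  have h2 : (u : ZMod q) = 1 := hinj (by simp [h1])
  have h3 : u = 1 := Units.ext h2
  rw [h3, orderOf_one] at hu
  exact hl.one_lt.ne hu

lemma rq_odd (q : ℕ) [Fact q.Prime] (m l : ℕ) (hl : l.Prime) (hodd : Odd l) (hlq : l ∣ q - 1)
    (h : Nat.gcd m (q - 1) ∣ 2 * l) (h3 : q % 4 = 3) (hq : 2 ^ l + 1 < q) :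
    ∃ c : ZMod q, c ≠ 0 ∧ ∀ y : ZMod q, y ^ l ≠ 1 - c ^ m := by
  by_contra! hcon
  have hlpos : l ≠ 0 := hl.ne_zero
  have h2 : (2 : ZMod q) ≠ 0 := by
    intro h0
    have : ((2 : ℕ) : ZMod q) = 0 := by exact_mod_cast h0
    rw [ZMod.natCast_eq_zero_iff] at this
    have := Nat.le_of_dvd (by norm_num) this
    omega
  let P : ZMod q → Prop := fun x => ∃ y, y ^ l = x
  have Pmul : ∀ x y, P x → P y → P (x * y) := by
    rintro _ _ ⟨a, rfl⟩ ⟨b, rfl⟩; exact ⟨a * b, mul_pow _ _ _⟩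
  have Pdiv : ∀ x y, P x → P y → P (x / y) := by
    rintro _ _ ⟨a, rfl⟩ ⟨b, rfl⟩; exact ⟨a / b, div_pow _ _ _⟩
  have Pneg : ∀ x, P x → P (-x) := by
    rintro _ ⟨a, rfl⟩; exact ⟨-a, hodd.neg_pow a⟩
  have P0 : P 0 := ⟨0, zero_pow hlpos⟩
  have P1 : P 1 := ⟨1, one_pow _⟩
  have c1 : ∀ w : ZMod q, w ≠ 0 → P (1 - w ^ (2 * l)) := by
    intro w hw
    obtain ⟨c, hc, hc'⟩ := rq_pow_gcd q m (2 * l) h w hw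
    rw [← hc']; exact hcon c hc
  have c2 : ∀ w : ZMod q, w ≠ 0 → w ^ (2 * l) ≠ 1 → P (1 + w ^ (2 * l)) := by
    intro w hw hw1
    have e : 1 + w ^ (2 * l) = (1 - (w * w) ^ (2 * l)) / (1 - w ^ (2 * l)) := by
      rw [eq_div_iff (sub_ne_zero.mpr hw1.symm), mul_pow]; ring
    rw [e]
    exact Pdiv _ _ (c1 _ (mul_ne_zero hw hw)) (c1 _ hw)
  have hsq : ∀ v : ZMod q, ∃ w : ZMod q, v = w ^ 2 ∨ v = - w ^ 2 := by
    intro v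
    by_cases hv : IsSquare v
    · obtain ⟨w, hw⟩ := hv
      exact ⟨w, Or.inl (by rw [hw]; ring)⟩
    · have hn : ¬ IsSquare (-1 : ZMod q) := by
        rw [ZMod.exists_sq_eq_neg_one_iff]; simpa using h3
      have : IsSquare (v * (-1)) := by
        have h1 := (FiniteField.isSquare_iff (F := ZMod q) (a := v))
        by_contra hns
        have hv0 : v ≠ 0 := by rintro rfl; exact hv (IsSquare.zero)
        have e1 := (quadraticChar_neg_one_iff_not_isSquare (F := ZMod q) (a := v)).mpr hv
        have e2 := (quadraticChar_neg_one_iff_not_isSquare (F := ZMod q) (a := -1)).mpr hn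
        have e3 := (quadraticChar_neg_one_iff_not_isSquare (F := ZMod q) (a := v * (-1))).mpr hns
        rw [map_mul, e1, e2] at e3
        norm_num at e3
      obtain ⟨w, hw⟩ := this
      exact ⟨w, Or.inr (by linear_combination -hw)⟩
  have c3 : ∀ y, P y → y ≠ 0 → y ≠ -1 → P (1 - y) := by
    rintro _ ⟨v, rfl⟩ hy0 hy1
    obtain ⟨w, hw⟩ := hsq v
    have hv : v ≠ 0 := by rintro rfl; exact hy0 (zero_pow hlpos)
    have hw0 : w ≠ 0 := by
      rintro rfl
      rcases hw with hw | hw <;> simp at hw <;> exact hv hw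
    rcases hw with hw | hw
    · rw [hw, ← pow_mul]; exact c1 w hw0
    · rw [hw, hodd.neg_pow, ← pow_mul, sub_neg_eq_add]
      apply c2 w hw0
      intro h1
      apply hy1
      rw [hw, hodd.neg_pow, ← pow_mul, h1]
  have P2 : P 2 := by
    have hk : ∀ k : ℕ, 0 < k → k < q → ((k : ℕ) : ZMod q) ≠ 0 := by
      intro k hk hkq h0
      rw [ZMod.natCast_eq_zero_iff] at h0
      exact absurd (Nat.le_of_dvd hk h0) (by omega)
    have hpw : 2 < 2 ^ l := by
      calc 2 = 2 ^ 1 := rfl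
        _ < 2 ^ l := Nat.pow_lt_pow_right (by norm_num) hl.one_lt
    set y : ZMod q := 2 ^ l with hy
    have hy0 : y ≠ 0 := pow_ne_zero _ h2
    have hy1 : y ≠ 1 := by
      intro h1
      apply hk (2 ^ l - 1) (by omega) (by omega)
      rw [Nat.cast_sub (by omega)]; push_cast; rw [← hy, h1]; simp
    have hym : y ≠ -1 := by
      intro h1
      apply hk (2 ^ l + 1) (by omega) (by omega)
      push_cast; rw [← hy, h1]; simp
    have Py : P y := ⟨2, rfl⟩
    have a1 : P (1 - y) := c3 y Py hy0 hym
    have a2 : P (1 + y) := by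
      have := c3 (-y) (Pneg _ Py) (neg_ne_zero.mpr hy0) (fun h => hy1 (neg_injective h))
      simpa using this
    have hy1' : (1 + y) ≠ 0 := fun h => hym (by linear_combination h)
    have hy2' : (1 - y) ≠ 0 := fun h => hy1 (by linear_combination -h)
    have a3 := c3 (-((1 - y) / (1 + y))) (Pneg _ (Pdiv _ _ a1 a2))
      (neg_ne_zero.mpr (div_ne_zero hy2' hy1')) (by
        intro h
        have h := neg_injective h
        rw [div_eq_one_iff_eq hy1'] at h
        have : 2 * y = 0 := by linear_combination -h
        exact (mul_ne_zero h2 hy0) this)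
    have e : (2 : ZMod q) = (1 + y) * (1 - -((1 - y) / (1 + y))) := by
      field_simp; ring
    rw [e]; exact Pmul _ _ a2 a3
  have hall : ∀ n : ℕ, P n := by
    intro n
    induction n with
    | zero => simpa using P0
    | succ n ih =>
      push_cast
      by_cases h0 : (n : ZMod q) = 0
      · rw [h0, zero_add]; exact P1
      · by_cases h1 : (n : ZMod q) = 1
        · rw [h1]; norm_num; exact P2
        · have := c3 (-n) (Pneg _ ih) (neg_ne_zero.mpr h0) (fun h => h1 (neg_injective h))
          rw [sub_neg_eq_add, add_comm] at this
          exact this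
  obtain ⟨x, hx⟩ := rq_exists_not_pow q l hl hlq
  obtain ⟨y, hy⟩ := hall x.val
  rw [ZMod.natCast_zmod_val] at hy
  exact hx y hy

/-- What we need from an auxiliary prime. -/
def RQGood (m l q : ℕ) : Prop :=
  (∃ c : ℕ, ¬ q ∣ c ∧ ∀ y : ZMod q, y ^ l ≠ 1 - (c : ZMod q) ^ m) ∧
  (∃ c : ℕ, ¬ q ∣ c ∧ ∀ y : ZMod q, y ^ l ≠ (c : ZMod q) ^ m - 1)

lemma rq_exists_prime (m l : ℕ) (hm : 0 < m) (hl : l.Prime) (hlm : l ∣ m) (N : ℕ) :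
    ∃ q, N < q ∧ q.Prime ∧ (∀ l', l'.Prime → l' ∣ m → l' ≠ 2 → l' ∣ q - 1 → l' = l) ∧ (l ≠ 2 → l ∣ q - 1) ∧
      RQGood m l q := by
  rcases hl.eq_two_or_odd' with rfl | hodd
  · obtain ⟨q, hqN, hqp, hq⟩ := Nat.forall_exists_prime_gt_and_modEq (N + 3) (q := 4 * m)
      (a := 4 * m - 1) (by omega) (by
        have := Nat.coprime_self_sub_right (n := 4 * m) (m := 1) (by omega)
        rw [Nat.coprime_comm, this]; simp)
    have hdvd : 4 * m ∣ q + 1 := by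
      have h1 : q + 1 ≡ 4 * m - 1 + 1 [MOD 4 * m] := hq.add_right 1
      rw [Nat.sub_add_cancel (by omega)] at h1
      exact (Nat.modEq_zero_iff_dvd.mp (h1.trans (by simp [Nat.ModEq])))
    have h4 : 4 ∣ q + 1 := (Dvd.intro _ rfl).trans hdvd
    have hmd : m ∣ q + 1 := (Dvd.intro_left _ rfl).trans hdvd
    have hg : Nat.gcd m (q - 1) ∣ 2 := by
      have h1 : Nat.gcd m (q - 1) ∣ q + 1 := (Nat.gcd_dvd_left _ _).trans hmd
      have h2 : Nat.gcd m (q - 1) ∣ q - 1 := Nat.gcd_dvd_right _ _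
      have h3 := Nat.dvd_sub h1 h2
      rwa [show q + 1 - (q - 1) = 2 by omega] at h3
    have : Fact q.Prime := ⟨hqp⟩
    refine ⟨q, by omega, hqp, ?_, by simp, ?_⟩
    · intro l' hl' hl'm hl'2 hl'q
      exact absurd ((Nat.prime_dvd_prime_iff_eq hl' Nat.prime_two).mp
        ((Nat.dvd_gcd hl'm hl'q).trans hg)) hl'2
    · obtain ⟨⟨c, hc, hc'⟩, ⟨d, hd, hd'⟩⟩ := rq_two q m hg (by omega) (by omega)
      refine ⟨⟨c.val, ?_, ?_⟩, ⟨d.val, ?_, ?_⟩⟩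
      · rw [← ZMod.natCast_eq_zero_iff, ZMod.natCast_zmod_val]; exact hc
      · rw [ZMod.natCast_zmod_val]; exact hc'
      · rw [← ZMod.natCast_eq_zero_iff, ZMod.natCast_zmod_val]; exact hd
      · rw [ZMod.natCast_zmod_val]; exact hd'
  · obtain ⟨e, m0, hm0, hme⟩ := Nat.exists_eq_pow_mul_and_not_dvd hm.ne' l hl.ne_one
    have hm0pos : 0 < m0 := by
      rcases Nat.eq_zero_or_pos m0 with h | h
      · subst h; simp at hm0
      · exact h
    have hl4 : Nat.Coprime (l ^ 2) (4 * m0) := by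
      apply Nat.Coprime.pow_left
      apply Nat.Coprime.mul_right
      · rw [show 4 = 2 ^ 2 by norm_num]
        exact Nat.Coprime.pow_right _ (Nat.coprime_two_right.mpr hodd)
      · exact (Nat.Prime.coprime_iff_not_dvd hl).mpr hm0
    obtain ⟨a, ha1, ha2⟩ := Nat.chineseRemainder hl4 (1 + l) (4 * m0 - 1)
    have hcop1 : Nat.Coprime a (l ^ 2) := by
      apply Nat.Coprime.pow_right
      have : a ≡ 1 [MOD l] := by
        have := ha1.of_dvd (Dvd.intro_left l (by ring) : l ∣ l ^ 2)
        refine this.trans ?_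
        simp [Nat.ModEq]
      rw [Nat.coprime_iff_gcd_eq_one, this.gcd_eq]; simp
    have hcop2 : Nat.Coprime a (4 * m0) := by
      rw [Nat.coprime_iff_gcd_eq_one, ha2.gcd_eq]
      have := Nat.coprime_self_sub_right (n := 4 * m0) (m := 1) (by omega)
      rw [← Nat.coprime_iff_gcd_eq_one, Nat.coprime_comm, this]; simp
    obtain ⟨q, hqN, hqp, hq⟩ := Nat.forall_exists_prime_gt_and_modEq (N + 2 ^ l + 1)
      (q := l ^ 2 * (4 * m0))
      (a := a) (by have := hl.pos; positivity) (Nat.Coprime.mul_right hcop1 hcop2)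
    have hq1 : q ≡ 1 + l [MOD l ^ 2] := (hq.of_dvd (Dvd.intro _ rfl)).trans ha1
    have hq2 : q ≡ 4 * m0 - 1 [MOD 4 * m0] := (hq.of_dvd (Dvd.intro_left _ rfl)).trans ha2
    have hdvd : 4 * m0 ∣ q + 1 := by
      have h1 : q + 1 ≡ 4 * m0 - 1 + 1 [MOD 4 * m0] := hq2.add_right 1
      rw [Nat.sub_add_cancel (by omega)] at h1
      exact (Nat.modEq_zero_iff_dvd.mp (h1.trans (by simp [Nat.ModEq])))
    have h4 : 4 ∣ q + 1 := (Dvd.intro _ rfl).trans hdvd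
    have hmd : m0 ∣ q + 1 := (Dvd.intro_left _ rfl).trans hdvd
    have hg0 : Nat.gcd m0 (q - 1) ∣ 2 := by
      have h1 : Nat.gcd m0 (q - 1) ∣ q + 1 := (Nat.gcd_dvd_left _ _).trans hmd
      have h2 : Nat.gcd m0 (q - 1) ∣ q - 1 := Nat.gcd_dvd_right _ _
      have h3 := Nat.dvd_sub h1 h2
      rwa [show q + 1 - (q - 1) = 2 by omega] at h3
    have hq1' : q - 1 ≡ l [MOD l ^ 2] := by
      have : 1 + (q - 1) ≡ 1 + l [MOD l ^ 2] := by rwa [Nat.add_sub_cancel' (by omega)]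
      exact Nat.ModEq.add_left_cancel' 1 this
    have hlq : l ∣ q - 1 := by
      have := hq1'.of_dvd (Dvd.intro_left l (by ring) : l ∣ l ^ 2)
      exact Nat.modEq_zero_iff_dvd.mp (this.trans (by simp [Nat.ModEq]))
    have hl2q : ¬ l ^ 2 ∣ q - 1 := by
      intro h
      have h1 := (hq1'.dvd_iff (dvd_refl (l ^ 2))).mp h
      have h2 := Nat.le_of_dvd hl.pos h1
      have := hl.one_lt
      nlinarith
    have hge : Nat.gcd (l ^ e) (q - 1) ∣ l := by
      have h1 : Nat.gcd (l ^ e) (q - 1) ∣ l ^ e := Nat.gcd_dvd_left _ _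
      obtain ⟨k, -, hk⟩ := (Nat.dvd_prime_pow hl).mp h1
      rw [hk]
      have hk1 : k ≤ 1 := by
        by_contra hk1
        apply hl2q
        refine (pow_dvd_pow l (by omega : 2 ≤ k)).trans ?_
        rw [← hk]; exact Nat.gcd_dvd_right _ _
      calc l ^ k ∣ l ^ 1 := pow_dvd_pow l hk1
        _ = l := pow_one l
    have hg : Nat.gcd m (q - 1) ∣ 2 * l := by
      rw [hme, mul_comm 2 l, Nat.gcd_comm]
      rw [Nat.gcd_comm] at hge hg0
      exact (Nat.gcd_mul_right_dvd_mul_gcd _ _ _).trans (mul_dvd_mul hge hg0)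
    have : Fact q.Prime := ⟨hqp⟩
    refine ⟨q, by have := Nat.zero_le (2 ^ l); omega, hqp, ?_, fun _ => hlq, ?_⟩
    · intro l' hl' hl'm hl'2 hl'q
      have := (Nat.dvd_gcd hl'm hl'q).trans hg
      rcases (Nat.Prime.dvd_mul hl').mp this with h | h
      · exact absurd ((Nat.prime_dvd_prime_iff_eq hl' Nat.prime_two).mp h) hl'2
      · exact (Nat.prime_dvd_prime_iff_eq hl' hl).mp h
    · obtain ⟨c, hc, hc'⟩ := rq_odd q m l hl hodd hlq hg (by omega) (by have := Nat.zero_le N; omega)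
      have hcq : ¬ q ∣ c.val := by
        rw [← ZMod.natCast_eq_zero_iff, ZMod.natCast_zmod_val]; exact hc
      refine ⟨⟨c.val, hcq, ?_⟩, ⟨c.val, hcq, ?_⟩⟩
      · rw [ZMod.natCast_zmod_val]; exact hc'
      · rw [ZMod.natCast_zmod_val]
        intro y hy
        apply hc' (-y)
        rw [hodd.neg_pow, hy]; ring

lemma rq_crt (t : Finset ℕ) (ht : ∀ p ∈ t, p.Prime) (f : ℕ → ℕ) (N : ℕ) :
    ∃ a, N < a ∧ ∀ p ∈ t, a ≡ f p [MOD p] := by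
  obtain ⟨k, hk⟩ := Nat.chineseRemainderOfFinset f id t (fun i hi => (ht i hi).ne_zero) (by
    intro i hi j hj hij
    exact (Nat.coprime_primes (ht i hi) (ht j hj)).mpr hij)
  have hpos : 0 < ∏ p ∈ t, p := Finset.prod_pos fun p hp => (ht p hp).pos
  refine ⟨k + (∏ p ∈ t, p) * (N + 1), by nlinarith, ?_⟩
  intro p hp
  refine Nat.ModEq.trans ?_ (hk p hp)
  have : p ∣ (∏ p ∈ t, p) * (N + 1) := (Finset.dvd_prod_of_mem _ hp).mul_right _
  exact ((Nat.modEq_zero_iff_dvd.mpr this).add_left k)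

/-- Choosing finitely many distinct auxiliary primes, all larger than `N`. -/
lemma rq_choose (m : ℕ) (hm : 1 < m) (N : ℕ) :
    ∃ q : ℕ → ℕ, Set.InjOn q (m.primeFactors : Set ℕ) ∧
      ∀ l ∈ m.primeFactors, N < q l ∧ (q l).Prime ∧ RQGood m l (q l) := by
  have h : ∀ l, ∃ q, l ∈ m.primeFactors → (N < q ∧ q.Prime ∧
      (∀ l', l'.Prime → l' ∣ m → l' ≠ 2 → l' ∣ q - 1 → l' = l) ∧ (l ≠ 2 → l ∣ q - 1) ∧
      RQGood m l q) := by
    intro l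
    by_cases hl : l ∈ m.primeFactors
    · obtain ⟨q, hq⟩ := rq_exists_prime m l (by omega) (Nat.prime_of_mem_primeFactors hl)
        (Nat.dvd_of_mem_primeFactors hl) N
      exact ⟨q, fun _ => hq⟩
    · exact ⟨0, fun h => absurd h hl⟩
  choose q hq using h
  refine ⟨q, ?_, fun l hl => ⟨(hq l hl).1, (hq l hl).2.1, (hq l hl).2.2.2.2⟩⟩
  intro l hl l' hl' he
  have hl1 : l ∈ m.primeFactors := hl
  have hl1' : l' ∈ m.primeFactors := hl'
  obtain ⟨-, -, h1, h2, -⟩ := hq l hl1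
  obtain ⟨-, -, h1', h2', -⟩ := hq l' hl1'
  have he : q l = q l' := he
  by_cases h : l = 2
  · by_cases h' : l' = 2
    · rw [h, h']
    · exact (h1 l' (Nat.prime_of_mem_primeFactors hl1') (Nat.dvd_of_mem_primeFactors hl1') h'
        (he ▸ h2' h')).symm
  · exact h1' l (Nat.prime_of_mem_primeFactors hl1) (Nat.dvd_of_mem_primeFactors hl1) h
      (he ▸ h2 h)

lemma rq_exists_ab (m : ℕ) (hm : 1 < m) : ∃ a b : ℕ, 1 < b ∧ 3 * b ^ m + 1 < a ^ m ∧
    Nat.Coprime a (b ^ m - 1) ∧ Nat.Coprime b (a ^ m - 1) ∧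
    ∀ l, l.Prime → l ∣ m →
      (∃ q, q.Prime ∧ q ∣ a ∧ ¬ q ∣ b ∧ ∀ y : ZMod q, y ^ l ≠ 1 - (b : ZMod q) ^ m) ∧
      (∃ r, r.Prime ∧ r ∣ b ∧ ¬ r ∣ a ∧ ∀ y : ZMod r, y ^ l ≠ (a : ZMod r) ^ m - 1) := by
  obtain ⟨r, hrinj, hr⟩ := rq_choose m hm 0
  obtain ⟨q, hqinj, hq⟩ := rq_choose m hm (∑ l ∈ m.primeFactors, r l)
  have hqr : ∀ l ∈ m.primeFactors, ∀ l' ∈ m.primeFactors, q l ≠ r l' := by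
    intro l hl l' hl' he
    have h1 := (hq l hl).1
    have h2 : r l' ≤ ∑ l ∈ m.primeFactors, r l :=
      Finset.single_le_sum (f := r) (fun _ _ => Nat.zero_le _) hl'
    omega
  have hc : ∀ l, ∃ c : ℕ, l ∈ m.primeFactors →
      (¬ q l ∣ c ∧ ∀ y : ZMod (q l), y ^ l ≠ 1 - (c : ZMod (q l)) ^ m) := by
    intro l
    by_cases hl : l ∈ m.primeFactors
    · obtain ⟨c, hc⟩ := (hq l hl).2.2.1
      exact ⟨c, fun _ => hc⟩
    · exact ⟨0, fun h => absurd h hl⟩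
  choose c hc using hc
  have hd : ∀ l, ∃ d : ℕ, l ∈ m.primeFactors →
      (¬ r l ∣ d ∧ ∀ y : ZMod (r l), y ^ l ≠ (d : ZMod (r l)) ^ m - 1) := by
    intro l
    by_cases hl : l ∈ m.primeFactors
    · obtain ⟨c, hc⟩ := (hr l hl).2.2.2
      exact ⟨c, fun _ => hc⟩
    · exact ⟨0, fun h => absurd h hl⟩
  choose d hd using hd
  let R : Finset ℕ := m.primeFactors.image r
  let Q : Finset ℕ := m.primeFactors.image q
  have hRp : ∀ p ∈ R, p.Prime := by
    intro p hp
    obtain ⟨l, hl, rfl⟩ := Finset.mem_image.mp hp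
    exact (hr l hl).2.1
  have hQp : ∀ p ∈ Q, p.Prime := by
    intro p hp
    obtain ⟨l, hl, rfl⟩ := Finset.mem_image.mp hp
    exact (hq l hl).2.1
  have hqR : ∀ l ∈ m.primeFactors, q l ∉ R := by
    intro l hl hmem
    obtain ⟨l', hl', he⟩ := Finset.mem_image.mp hmem
    exact hqr l hl l' hl' he.symm
  have hrQ : ∀ l ∈ m.primeFactors, r l ∉ Q := by
    intro l hl hmem
    obtain ⟨l', hl', he⟩ := Finset.mem_image.mp hmem
    exact hqr l' hl' l hl he
  let qi := Function.invFunOn q (m.primeFactors : Set ℕ)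
  let ri := Function.invFunOn r (m.primeFactors : Set ℕ)
  have hqi : ∀ l ∈ m.primeFactors, qi (q l) = l := fun l hl => hqinj.leftInvOn_invFunOn hl
  have hri : ∀ l ∈ m.primeFactors, ri (r l) = l := fun l hl => hrinj.leftInvOn_invFunOn hl
  obtain ⟨b, hb1, hb⟩ := rq_crt (R ∪ Q)
    (fun p hp => (Finset.mem_union.mp hp).elim (hRp p) (hQp p))
    (fun p => if p ∈ Q then c (qi p) else 0) 1
  have hbq : ∀ l ∈ m.primeFactors, b ≡ c l [MOD q l] := by
    intro l hl
    have hmem : q l ∈ Q := Finset.mem_image_of_mem q hl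
    have := hb (q l) (Finset.mem_union_right _ hmem)
    simpa only [hmem, if_true, hqi l hl] using this
  have hbr : ∀ l ∈ m.primeFactors, r l ∣ b := by
    intro l hl
    have hmem : r l ∈ R := Finset.mem_image_of_mem r hl
    have := hb (r l) (Finset.mem_union_left _ hmem)
    simp only [hrQ l hl, if_false] at this
    exact Nat.modEq_zero_iff_dvd.mp this
  have hbm : 1 < b ^ m := Nat.one_lt_pow (by omega) hb1
  have hnot : ∀ p, p.Prime → p ∣ b → ¬ p ∣ b ^ m - 1 := by
    intro p hp h1 h2
    have h3 : p ∣ b ^ m := dvd_pow h1 (by omega)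
    have h4 := Nat.dvd_sub h3 h2
    rw [show b ^ m - (b ^ m - 1) = 1 by omega] at h4
    exact hp.one_lt.ne' (Nat.dvd_one.mp h4)
  have hcast : ∀ l ∈ m.primeFactors, ((b : ℕ) : ZMod (q l)) = c l := fun l hl =>
    (ZMod.natCast_eq_natCast_iff _ _ _).mpr (hbq l hl)
  have hqb : ∀ l ∈ m.primeFactors, ¬ q l ∣ b ^ m - 1 := by
    intro l hl h
    have h1 := (ZMod.natCast_eq_zero_iff _ _).mpr h
    rw [Nat.cast_sub (by omega)] at h1
    push_cast at h1
    rw [hcast l hl] at h1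
    apply (hc l hl).2 0
    rw [zero_pow (Nat.prime_of_mem_primeFactors hl).ne_zero]
    linear_combination h1
  obtain ⟨a, ha1, ha⟩ := rq_crt (R ∪ Q ∪ (b * (b ^ m - 1)).primeFactors)
    (fun p hp => by
      rcases Finset.mem_union.mp hp with h | h
      · exact (Finset.mem_union.mp h).elim (hRp p) (hQp p)
      · exact Nat.prime_of_mem_primeFactors h)
    (fun p => if p ∈ R then d (ri p) else if p ∣ b ^ m - 1 then 1 else 0) (3 * b ^ m + 1)
  have har : ∀ l ∈ m.primeFactors, a ≡ d l [MOD r l] := by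
    intro l hl
    have hmem : r l ∈ R := Finset.mem_image_of_mem r hl
    have := ha (r l) (Finset.mem_union_left _ (Finset.mem_union_left _ hmem))
    simpa only [hmem, if_true, hri l hl] using this
  have haq : ∀ l ∈ m.primeFactors, q l ∣ a := by
    intro l hl
    have hmem : q l ∈ Q := Finset.mem_image_of_mem q hl
    have := ha (q l) (Finset.mem_union_left _ (Finset.mem_union_right _ hmem))
    simp only [hqR l hl, hqb l hl, if_false] at this
    exact Nat.modEq_zero_iff_dvd.mp this
  have hcasta : ∀ l ∈ m.primeFactors, ((a : ℕ) : ZMod (r l)) = d l := fun l hl =>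
    (ZMod.natCast_eq_natCast_iff _ _ _).mpr (har l hl)
  have ham : 1 ≤ a ^ m := Nat.one_le_pow _ _ (by omega)
  have hne : b * (b ^ m - 1) ≠ 0 := mul_ne_zero (by omega) (by omega)
  refine ⟨a, b, hb1, ha1.trans_le (Nat.le_self_pow (by omega) a), ?_, ?_, ?_⟩
  · refine Nat.Coprime.symm (Nat.coprime_of_dvd ?_)
    intro p hp h1 h2
    have hpt : p ∈ (b * (b ^ m - 1)).primeFactors :=
      Nat.mem_primeFactors.mpr ⟨hp, h1.mul_left _, hne⟩
    have hpR : p ∉ R := by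
      intro h
      obtain ⟨l, hl, rfl⟩ := Finset.mem_image.mp h
      exact hnot _ hp (hbr l hl) h1
    have := ha p (Finset.mem_union_right _ hpt)
    simp only [hpR, h1, if_false, if_true] at this
    have h3 := (this.dvd_iff (dvd_refl p)).mp h2
    exact hp.one_lt.ne' (Nat.dvd_one.mp h3)
  · refine Nat.coprime_of_dvd ?_
    intro p hp h1 h2
    have hpt : p ∈ (b * (b ^ m - 1)).primeFactors :=
      Nat.mem_primeFactors.mpr ⟨hp, h1.mul_right _, hne⟩
    by_cases hpR : p ∈ R
    · obtain ⟨l, hl, rfl⟩ := Finset.mem_image.mp hpR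
      have h3 := (ZMod.natCast_eq_zero_iff _ _).mpr h2
      rw [Nat.cast_sub (by omega)] at h3
      push_cast at h3
      rw [hcasta l hl] at h3
      apply (hd l hl).2 0
      rw [zero_pow (Nat.prime_of_mem_primeFactors hl).ne_zero]
      linear_combination -h3
    · have := ha p (Finset.mem_union_right _ hpt)
      simp only [hpR, hnot p hp h1, if_false] at this
      have h3 : p ∣ a ^ m := dvd_pow (Nat.modEq_zero_iff_dvd.mp this) (by omega)
      have h4 := Nat.dvd_sub h3 h2
      rw [show a ^ m - (a ^ m - 1) = 1 by omega] at h4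
      exact hp.one_lt.ne' (Nat.dvd_one.mp h4)
  · intro l hl hlm
    have hlm : l ∈ m.primeFactors := Nat.mem_primeFactors.mpr ⟨hl, hlm, by omega⟩
    refine ⟨⟨q l, (hq l hlm).2.1, haq l hlm, ?_, ?_⟩, ⟨r l, (hr l hlm).2.1, hbr l hlm, ?_, ?_⟩⟩
    · rw [(hbq l hlm).dvd_iff (dvd_refl _)]; exact (hc l hlm).1
    · rw [hcast l hlm]; exact (hc l hlm).2
    · rw [(har l hlm).dvd_iff (dvd_refl _)]; exact (hd l hlm).1
    · rw [hcasta l hlm]; exact (hd l hlm).2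

open Polynomial in
lemma rq_minpoly (K : Type) [Field K] [NumberField K] (T A : ℤ)
    (hns : ¬ IsSquare (T ^ 2 - 4 * A)) (α : K) (hα : α ^ 2 - T * α + A = 0) :
    minpoly ℚ α = X ^ 2 - C (T : ℚ) * X + C (A : ℚ) := by
  symm
  have hdeg : (X ^ 2 - C (T : ℚ) * X + C (A : ℚ)).natDegree = 2 := by
    compute_degree!
  have hmon : (X ^ 2 - C (T : ℚ) * X + C (A : ℚ)).Monic := by
    monicity!
  apply minpoly.eq_of_irreducible_of_monic
  · rw [hmon.irreducible_iff_roots_eq_zero_of_degree_le_three (by omega) (by omega)]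
    rw [Multiset.eq_zero_iff_forall_notMem]
    intro x hx
    rw [mem_roots hmon.ne_zero, IsRoot.def] at hx
    simp only [eval_add, eval_sub, eval_mul, eval_pow, eval_X, eval_C] at hx
    apply hns
    have : IsSquare (((T ^ 2 - 4 * A : ℤ)) : ℚ) := by
      refine ⟨2 * x - T, ?_⟩
      push_cast
      linear_combination -4 * hx
    exact Rat.isSquare_intCast_iff.mp this
  · simpa using hα
  · exact hmon

open Polynomial in
lemma rq_lift (K : Type) [Field K] [NumberField K] (hK : Module.finrank ℚ K = 2) (T A : ℤ)
    (hns : ¬ IsSquare (T ^ 2 - 4 * A)) (α : K) (hα : α ^ 2 - T * α + A = 0)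
    (F : Type) [Field F] [Algebra ℚ F] (ρ : F) (hρ : ρ ^ 2 - T * ρ + A = 0) :
    ∃ φ : K →ₐ[ℚ] F, φ α = ρ := by
  have hmin := rq_minpoly K T A hns α hα
  have hIntegral : IsIntegral ℚ α := Algebra.IsIntegral.isIntegral α
  have hdeg : (X ^ 2 - C (T : ℚ) * X + C (A : ℚ)).natDegree = 2 := by
    compute_degree!
  have htop : IntermediateField.adjoin ℚ {α} = ⊤ := by
    rw [Field.primitive_element_iff_minpoly_natDegree_eq, hK, hmin, hdeg]
  have htop' : Algebra.adjoin ℚ {α} = ⊤ := by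
    rw [← IntermediateField.adjoin_simple_toSubalgebra_of_isAlgebraic hIntegral.isAlgebraic, htop]
    simp
  let pb := PowerBasis.ofAdjoinEqTop hIntegral htop'
  have hgen : pb.gen = α := PowerBasis.ofAdjoinEqTop_gen hIntegral htop'
  have h0 : aeval ρ (minpoly ℚ pb.gen) = 0 := by
    rw [hgen, hmin]; simpa using hρ
  refine ⟨pb.lift ρ h0, ?_⟩
  have := pb.lift_gen ρ h0
  rwa [hgen] at this

open Polynomial in
lemma rq_hensel (p : ℕ) [Fact p.Prime] (T A z0 : ℤ) (h1 : (p : ℤ) ∣ z0 ^ 2 - T * z0 + A)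
    (h2 : ¬ (p : ℤ) ∣ 2 * z0 - T) :
    ∃ z : ℤ_[p], z ^ 2 - T * z + A = 0 ∧ PadicInt.toZMod z = (z0 : ZMod p) := by
  let F : ℤ_[p][X] := X ^ 2 - C (T : ℤ_[p]) * X + C (A : ℤ_[p])
  have e1 : ∀ z : ℤ_[p], aeval z F = z ^ 2 - T * z + A := by intro z; simp [F]
  have e2 : ∀ z : ℤ_[p], aeval z (derivative F) = 2 * z - T := by
    intro z; simp [F]; left; norm_num
  have n1 : ‖aeval (z0 : ℤ_[p]) F‖ < 1 := by
    rw [e1]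
    have : ((z0 : ℤ_[p]) ^ 2 - T * z0 + A) = ((z0 ^ 2 - T * z0 + A : ℤ) : ℤ_[p]) := by push_cast; ring
    rw [this, PadicInt.norm_intCast_lt_one_iff]
    exact h1
  have n2 : ‖aeval (z0 : ℤ_[p]) (derivative F)‖ = 1 := by
    rw [e2]
    have : (2 * (z0 : ℤ_[p]) - T) = ((2 * z0 - T : ℤ) : ℤ_[p]) := by push_cast; ring
    rw [this]
    by_contra hne
    have hlt := lt_of_le_of_ne (PadicInt.norm_le_one ((2 * z0 - T : ℤ) : ℤ_[p])) hne
    exact h2 (PadicInt.norm_intCast_lt_one_iff.mp hlt)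
  obtain ⟨z, hz1, hz2, -⟩ := hensels_lemma (F := F) (a := (z0 : ℤ_[p])) (by rw [n2]; simpa using n1)
  refine ⟨z, by rw [← e1, hz1], ?_⟩
  rw [n2] at hz2
  have hmem : z - z0 ∈ IsLocalRing.maximalIdeal ℤ_[p] := by
    rw [IsLocalRing.mem_maximalIdeal, PadicInt.mem_nonunits]; exact hz2
  rw [← PadicInt.ker_toZMod, RingHom.mem_ker, map_sub, sub_eq_zero, map_intCast] at hmem
  exact hmem

/-- A degree one prime, as a ring homomorphism to `ZMod p`. -/
lemma rq_reduction (K : Type) [Field K] [NumberField K] (hK : Module.finrank ℚ K = 2) (T A : ℤ)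
    (hns : ¬ IsSquare (T ^ 2 - 4 * A)) (α : 𝓞 K) (hα : α ^ 2 - T * α + A = 0)
    (p : ℕ) [Fact p.Prime] (z0 : ℤ) (h1 : (p : ℤ) ∣ z0 ^ 2 - T * z0 + A)
    (h2 : ¬ (p : ℤ) ∣ 2 * z0 - T) :
    ∃ ψ : 𝓞 K →+* ZMod p, ψ α = (z0 : ZMod p) := by
  obtain ⟨z, hz, hz'⟩ := rq_hensel p T A z0 h1 h2
  obtain ⟨φ, hφ⟩ := rq_lift K hK T A hns (α : K)
    (by have := congrArg (algebraMap (𝓞 K) K) hα; simpa using this) ℚ_[p] (z : ℚ_[p])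
    (by have := congrArg (fun w : ℤ_[p] => (w : ℚ_[p])) hz; simpa using this)
  have hIntegral : ∀ x : 𝓞 K, φ (x : K) ∈ (PadicInt.subring p) := by
    intro x
    have hx : IsIntegral ℤ (φ (x : K)) := (RingOfIntegers.isIntegral_coe x).map (φ.restrictScalars ℤ)
    have hx' : IsIntegral ℤ_[p] (φ (x : K)) := hx.tower_top
    obtain ⟨y, hy⟩ := IsIntegrallyClosed.isIntegral_iff.mp hx'
    rw [← hy]
    exact y.2
  let f : 𝓞 K →+* ℚ_[p] := (φ : K →+* ℚ_[p]).comp (algebraMap (𝓞 K) K)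
  let g : 𝓞 K →+* ℤ_[p] := f.codRestrict (PadicInt.subring p) hIntegral
  refine ⟨(PadicInt.toZMod).comp g, ?_⟩
  have hg : g α = z := Subtype.ext hφ
  rw [RingHom.comp_apply, hg, hz']

lemma rq_units (K : Type) [Field K] [NumberField K] (hK : Module.finrank ℚ K = 2)
    (φ : K →+* ℝ) : ∃ η : (𝓞 K)ˣ, ∀ u : (𝓞 K)ˣ, ∃ s : ℤ, u = η ^ s ∨ u = - η ^ s := by
  have hrank : Units.rank K ≤ 1 := by
    have h1 := InfinitePlace.card_add_two_mul_card_eq_rank K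
    have h2 := InfinitePlace.card_eq_nrRealPlaces_add_nrComplexPlaces K
    unfold Units.rank
    omega
  have htor : ∀ ζ : (𝓞 K)ˣ, ζ ∈ Units.torsion K → ζ = 1 ∨ ζ = -1 := by
    intro ζ hζ
    obtain ⟨n, hn, hζn⟩ := (isOfFinOrder_iff_pow_eq_one).mp ((CommGroup.mem_torsion _).mp hζ)
    have h1 : (φ (ζ : K)) ^ n = 1 := by
      rw [← map_pow]
      have : ((ζ : K)) ^ n = 1 := by
        have := congrArg (fun u : (𝓞 K)ˣ => ((u : 𝓞 K) : K)) hζn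
        simpa using this
      rw [this, map_one]
    have h2 : |φ (ζ : K)| = 1 := by
      have h3 : |φ (ζ : K)| ^ n = 1 := by rw [← abs_pow, h1, abs_one]
      exact (pow_eq_one_iff_of_nonneg (abs_nonneg _) (by omega)).mp h3
    rcases (abs_eq (by norm_num)).mp h2 with h | h
    · left
      have : (ζ : K) = 1 := φ.injective (by rw [h, map_one])
      ext; simpa using this
    · right
      have : (ζ : K) = -1 := φ.injective (by rw [h, map_neg, map_one])
      ext; simpa using this
  by_cases hne : Nonempty (Fin (Units.rank K))
  · obtain ⟨k⟩ := hne
    have : Subsingleton (Fin (Units.rank K)) := Fin.subsingleton_iff_le_one.mpr hrank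
    refine ⟨Units.fundSystem K k, fun u => ?_⟩
    obtain ⟨⟨ζ, e⟩, he, -⟩ := Units.exist_unique_eq_mul_prod K u
    refine ⟨e k, ?_⟩
    rw [Fintype.prod_subsingleton _ k] at he
    rcases htor ζ ζ.2 with h | h
    · left; rw [he]; simp [h]
    · right; rw [he]; simp [h]
  · have : IsEmpty (Fin (Units.rank K)) := not_nonempty_iff.mp hne
    refine ⟨1, fun u => ?_⟩
    obtain ⟨⟨ζ, e⟩, he, -⟩ := Units.exist_unique_eq_mul_prod K u
    refine ⟨0, ?_⟩
    rcases htor ζ ζ.2 with h | h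
    · left; rw [he]; simp [h]
    · right; rw [he]; simp [h]

/-- Two units of a real quadratic field are dependent modulo signs and `l`-th powers. -/
lemma rq_units_dep (K : Type) [Field K] [NumberField K] (hK : Module.finrank ℚ K = 2)
    (φ : K →+* ℝ) (l : ℕ) (hl : l.Prime) (u v : (𝓞 K)ˣ) :
    ∃ i j : ℕ, ¬ (l ∣ i ∧ l ∣ j) ∧ ∃ w : (𝓞 K)ˣ, u ^ i * v ^ j = w ^ l ∨ u ^ i * v ^ j = - w ^ l := by
  obtain ⟨η, hη⟩ := rq_units K hK φ
  obtain ⟨s, hs⟩ := hη u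
  obtain ⟨t, ht⟩ := hη v
  have key : ∃ i j : ℕ, ¬ (l ∣ i ∧ l ∣ j) ∧ (l : ℤ) ∣ s * i + t * j := by
    by_cases hsl : (l : ℤ) ∣ s
    · refine ⟨1, 0, fun h => hl.one_lt.ne' (Nat.dvd_one.mp h.1), by simpa using hsl⟩
    · have hl0 : (l : ℤ) ≠ 0 := by exact_mod_cast hl.ne_zero
      refine ⟨(t % l).toNat, ((-s) % l).toNat, ?_, ?_⟩
      · rintro ⟨-, h⟩
        apply hsl
        have h' : (l : ℤ) ∣ (((-s) % l).toNat : ℤ) := by exact_mod_cast h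
        rw [Int.toNat_of_nonneg (Int.emod_nonneg _ hl0)] at h'
        have := (Int.dvd_iff_emod_eq_zero.mp h')
        rw [Int.emod_emod_of_dvd _ (dvd_refl _)] at this
        exact (Int.dvd_neg).mp (Int.dvd_of_emod_eq_zero this)
      · rw [Int.toNat_of_nonneg (Int.emod_nonneg _ hl0), Int.toNat_of_nonneg (Int.emod_nonneg _ hl0),
          Int.emod_def, Int.emod_def]
        exact ⟨-s * (t / l) - t * ((-s) / l), by ring⟩
  obtain ⟨i, j, hij, w, hw⟩ := key
  refine ⟨i, j, hij, η ^ w, ?_⟩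
  have e : (η ^ w) ^ l = (η ^ s) ^ i * (η ^ t) ^ j := by
    rw [← zpow_natCast, ← zpow_natCast, ← zpow_natCast, ← zpow_mul, ← zpow_mul, ← zpow_mul,
      ← zpow_add, hw, mul_comm]
  have hpm : ∀ (x : (𝓞 K)ˣ) (n : ℕ), (-x) ^ n = x ^ n ∨ (-x) ^ n = - x ^ n := by
    intro x n
    rcases Nat.even_or_odd n with h | h
    · left; exact h.neg_pow x
    · right; exact h.neg_pow x
  rw [e]
  rcases hs with rfl | rfl <;> rcases ht with rfl | rfl
  · left; rfl
  · rcases hpm (η ^ t) j with h | h <;> rw [h] <;> simp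
  · rcases hpm (η ^ s) i with h | h <;> rw [h] <;> simp
  · rcases hpm (η ^ t) j with h | h <;> rcases hpm (η ^ s) i with h' | h' <;> rw [h, h'] <;> simp

lemma rq_root (F : Type) [Field F] (l : ℕ) (hl : l.Prime) (x y : F) (hx : x ≠ 0) (j : ℕ)
    (h : x ^ j = y ^ l) (hj : ¬ l ∣ j) : ∃ z, z ^ l = x := by
  have hcop : Nat.Coprime j l := ((Nat.Prime.coprime_iff_not_dvd hl).mpr hj).symm
  have hb := Nat.gcd_eq_gcd_ab j l
  rw [Nat.coprime_iff_gcd_eq_one.mp hcop] at hb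
  refine ⟨y ^ (Nat.gcdA j l) * x ^ (Nat.gcdB j l), ?_⟩
  have e1 : (y ^ (Nat.gcdA j l)) ^ l = (x ^ j) ^ (Nat.gcdA j l) := by
    rw [h, ← zpow_natCast, ← zpow_natCast, ← zpow_mul, ← zpow_mul, mul_comm]
  rw [mul_pow, e1]
  calc (x ^ j) ^ (Nat.gcdA j l) * (x ^ (Nat.gcdB j l)) ^ l
      = x ^ ((j : ℤ) * Nat.gcdA j l + l * Nat.gcdB j l) := by
        rw [zpow_add₀ hx, zpow_mul, zpow_natCast, mul_comm (l : ℤ), zpow_mul, zpow_natCast]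
    _ = x := by rw [← hb]; simp

lemma rq_class (K : Type) [Field K] [NumberField K] (m l k : ℕ) (hm : 1 < m) (hl : l.Prime)
    (hlm : l ∣ m) (hk : l ^ k ∣ m) (hcl : ¬ l ^ k ∣ Nat.card (ClassGroup (𝓞 K)))
    (α β c : 𝓞 K) (h0 : α ≠ 0) (hmul : α * β = c ^ m) (hcop : IsCoprime α β) :
    ∃ (γ : 𝓞 K) (u : (𝓞 K)ˣ), γ ^ l = α * u := by
  have hI : ∃ I : Ideal (𝓞 K), Ideal.span {α} = I ^ m := by
    apply exists_eq_pow_of_mul_eq_pow_of_coprime (b := Ideal.span {β}) (c := Ideal.span {c})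
    · exact (Ideal.isCoprime_span_singleton_iff α β).mpr hcop
    · rw [Ideal.span_singleton_mul_span_singleton, hmul, Ideal.span_singleton_pow]
  obtain ⟨I, hI⟩ := hI
  have hspan : Ideal.span {α} ≠ (⊥ : Ideal (𝓞 K)) := by
    rwa [Ne, Ideal.span_singleton_eq_bot]
  have hI0 : I ≠ ⊥ := by
    rintro rfl
    apply hspan
    rw [hI, ← Ideal.zero_eq_bot, zero_pow (by omega)]
  have hImem : I ∈ nonZeroDivisors (Ideal (𝓞 K)) := mem_nonZeroDivisors_of_ne_zero hI0
  let J : nonZeroDivisors (Ideal (𝓞 K)) := ⟨I, hImem⟩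
  let x : ClassGroup (𝓞 K) := ClassGroup.mk0 J
  have hpow : ∀ n : ℕ, x ^ n = 1 ↔ Submodule.IsPrincipal (I ^ n) := by
    intro n
    rw [← map_pow]
    exact ClassGroup.mk0_eq_one_iff (I := I ^ n) (J ^ n).2
  have hx : x ^ m = 1 := by
    rw [hpow, ← hI]; exact ⟨α, rfl⟩
  have ho1 : orderOf x ∣ m := orderOf_dvd_of_pow_eq_one hx
  have ho2 : orderOf x ∣ Nat.card (ClassGroup (𝓞 K)) := orderOf_dvd_natCard x
  have ho : x ^ (m / l) = 1 := by
    apply orderOf_dvd_iff_pow_eq_one.mp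
    obtain ⟨t, ht⟩ := ho1
    by_cases hlt : l ∣ t
    · obtain ⟨t', rfl⟩ := hlt
      refine ⟨t', Nat.div_eq_of_eq_mul_left hl.pos ?_⟩
      rw [ht]; ring
    · exfalso
      apply hcl
      have h1 : Nat.Coprime (l ^ k) t :=
        Nat.Coprime.pow_left k ((Nat.Prime.coprime_iff_not_dvd hl).mpr hlt)
      exact (h1.dvd_of_dvd_mul_right (ht ▸ hk)).trans ho2
  obtain ⟨γ, hγ⟩ := ((hpow _).mp ho).principal
  have hγ' : I ^ (m / l) = Ideal.span {γ} := hγ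
  have hassoc : Ideal.span {α} = Ideal.span {γ ^ l} := by
    rw [← Ideal.span_singleton_pow, ← hγ', ← pow_mul, Nat.div_mul_cancel hlm, hI]
  obtain ⟨u, hu⟩ := Ideal.span_singleton_eq_span_singleton.mp hassoc
  exact ⟨γ, u, hu.symm⟩

lemma rq_main (m : ℕ) (hm : 1 < m) (a b : ℕ) (hb : 1 < b) (hab : 3 * b ^ m + 1 < a ^ m)
    (hc1 : Nat.Coprime a (b ^ m - 1)) (hc2 : Nat.Coprime b (a ^ m - 1))
    (hl : ∀ l, l.Prime → l ∣ m →
      (∃ q, q.Prime ∧ q ∣ a ∧ ¬ q ∣ b ∧ ∀ y : ZMod q, y ^ l ≠ 1 - (b : ZMod q) ^ m) ∧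
      (∃ r, r.Prime ∧ r ∣ b ∧ ¬ r ∣ a ∧ ∀ y : ZMod r, y ^ l ≠ (a : ZMod r) ^ m - 1))
    (T A : ℤ) (hT : T = (a : ℤ) ^ m - (b : ℤ) ^ m + 1) (hA : A = (a : ℤ) ^ m)
    (hns : ¬ IsSquare (T ^ 2 - 4 * A)) (hpos : 0 < T ^ 2 - 4 * A)
    (K : Type) [Field K] [NumberField K] (hK : Module.finrank ℚ K = 2)
    (α : 𝓞 K) (hα : α ^ 2 - T * α + A = 0) : m ∣ Nat.card (ClassGroup (𝓞 K)) := by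
  rw [Nat.dvd_iff_prime_pow_dvd_dvd]
  intro l k hlp hk
  by_contra hcl
  have hk0 : k ≠ 0 := by rintro rfl; exact hcl (by simp)
  have hlm : l ∣ m := (dvd_pow_self l hk0).trans hk
  obtain ⟨⟨q, hqp, hqa, hqb, hq⟩, ⟨r, hrp, hrb, hra, hr⟩⟩ := hl l hlp hlm
  have hbm : 1 < b ^ m := Nat.one_lt_pow (by omega) hb
  have hTK : (T : 𝓞 K) = (a : 𝓞 K) ^ m - (b : 𝓞 K) ^ m + 1 := by rw [hT]; push_cast; ring
  have hAK : (A : 𝓞 K) = (a : 𝓞 K) ^ m := by rw [hA]; push_cast; ring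
  have habZ : 3 * (b : ℤ) ^ m + 1 < (a : ℤ) ^ m := by exact_mod_cast hab
  have hbZ : 1 < (b : ℤ) ^ m := by exact_mod_cast hbm
  -- real embedding
  obtain ⟨φ, hφ1, hφ2⟩ : ∃ φ : K →+* ℝ, 0 < φ (α : K) ∧ 0 < φ (α : K) - 1 := by
    have hsq : √(((T ^ 2 - 4 * A : ℤ)) : ℝ) ^ 2 = ((T ^ 2 - 4 * A : ℤ) : ℝ) :=
      Real.sq_sqrt (by exact_mod_cast hpos.le)
    set s := √(((T ^ 2 - 4 * A : ℤ)) : ℝ) with hs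
    have hs0 : 0 ≤ s := Real.sqrt_nonneg _
    push_cast at hsq
    obtain ⟨φ, hφ⟩ := rq_lift K hK T A hns (α : K)
      (by have := congrArg (algebraMap (𝓞 K) K) hα; simpa using this) ℝ ((T + s) / 2)
      (by linear_combination hsq / 4)
    have hT2 : (2 : ℝ) < T := by
      have : 2 < T := by omega
      exact_mod_cast this
    refine ⟨φ.toRingHom, ?_, ?_⟩
    · change 0 < φ (α : K)
      rw [hφ]; linarith
    · change 0 < φ (α : K) - 1
      rw [hφ]; linarith
  -- ideals
  have hα0 : α ≠ 0 := by
    rintro rfl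
    simp at hφ1
  have hα1 : α - 1 ≠ 0 := by
    intro h
    have : (α : 𝓞 K) = 1 := sub_eq_zero.mp h
    rw [this] at hφ2
    simp at hφ2
  have hcopA : IsCoprime α ((T : 𝓞 K) - α) := by
    have h1 : IsCoprime (a : ℤ) (((b ^ m - 1 : ℕ)) : ℤ) := Nat.isCoprime_iff_coprime.mpr hc1
    have h2 : IsCoprime ((a : ℤ) ^ m) (((b ^ m - 1 : ℕ)) : ℤ) := h1.pow_left
    obtain ⟨s, t, hst⟩ := h2
    rw [Nat.cast_sub hbm.le] at hst
    have hst' := congrArg (Int.cast : ℤ → 𝓞 K) hst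
    push_cast at hst'
    refine ⟨(s + t) * (T - α) - t, -t, ?_⟩
    linear_combination hst' - (s + t) * hα + (s + t) * hAK - t * hTK
  have hcopB : IsCoprime (α - 1) ((T : 𝓞 K) - 1 - α) := by
    have h1 : IsCoprime (b : ℤ) (((a ^ m - 1 : ℕ)) : ℤ) := Nat.isCoprime_iff_coprime.mpr hc2
    have h2 : IsCoprime ((b : ℤ) ^ m) (((a ^ m - 1 : ℕ)) : ℤ) := h1.pow_left
    obtain ⟨s, t, hst⟩ := h2
    rw [Nat.cast_sub (by omega)] at hst
    have hst' := congrArg (Int.cast : ℤ → 𝓞 K) hst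
    push_cast at hst'
    refine ⟨(s + t) * (T - 1 - α) + t, t, ?_⟩
    linear_combination hst' - (s + t) * hα + (s + t) * hAK - s * hTK
  obtain ⟨γ1, u1, h1⟩ := rq_class K m l k hm hlp hlm hk hcl α (T - α) (a : 𝓞 K) hα0
    (by rw [← hAK]; linear_combination -hα) hcopA
  obtain ⟨γ2, u2, h2⟩ := rq_class K m l k hm hlp hlm hk hcl (α - 1) (T - 1 - α) (b : 𝓞 K) hα1
    (by linear_combination -hα + hAK - hTK) hcopB
  obtain ⟨i, j, hij, w, hw⟩ := rq_units_dep K hK φ l hlp u1 u2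
  have hγ : ∃ γ : 𝓞 K, α ^ i * (α - 1) ^ j = γ ^ l := by
    have e0 : α ^ i * (α - 1) ^ j * ((u1 ^ i * u2 ^ j : (𝓞 K)ˣ) : 𝓞 K) = (γ1 ^ i * γ2 ^ j) ^ l := by
      have : (γ1 ^ i * γ2 ^ j) ^ l = (γ1 ^ l) ^ i * (γ2 ^ l) ^ j := by
        rw [mul_pow, ← pow_mul, ← pow_mul, ← pow_mul, ← pow_mul, mul_comm i, mul_comm j]
      rw [this, h1, h2, mul_pow, mul_pow]
      push_cast
      ring
    have hww : (w : 𝓞 K) ^ l * ((w⁻¹ : (𝓞 K)ˣ) : 𝓞 K) ^ l = 1 := by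
      rw [← mul_pow, Units.mul_inv, one_pow]
    have e1 : ∃ γ : 𝓞 K, α ^ i * (α - 1) ^ j = γ ^ l ∨ α ^ i * (α - 1) ^ j = - γ ^ l := by
      refine ⟨(γ1 ^ i * γ2 ^ j) * ((w⁻¹ : (𝓞 K)ˣ) : 𝓞 K), ?_⟩
      rw [mul_pow _ ((w⁻¹ : (𝓞 K)ˣ) : 𝓞 K), ← e0]
      rcases hw with hw | hw
      · left
        rw [hw]; push_cast
        linear_combination -(α ^ i * (α - 1) ^ j) * hww
      · right
        rw [hw]; push_cast
        linear_combination -(α ^ i * (α - 1) ^ j) * hww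
    obtain ⟨γ, hγ | hγ⟩ := e1
    · exact ⟨γ, hγ⟩
    · rcases hlp.eq_two_or_odd' with rfl | hodd
      · exfalso
        have h3 := congrArg (fun z : 𝓞 K => φ (z : K)) hγ
        simp only [map_mul, map_pow, map_sub, map_one, map_neg] at h3
        have h4 : 0 < φ (α : K) ^ i * (φ (α : K) - 1) ^ j := mul_pos (pow_pos hφ1 _) (pow_pos hφ2 _)
        have h5 := sq_nonneg (φ (γ : K))
        linarith
      · exact ⟨-γ, by rw [hγ, hodd.neg_pow]⟩
  obtain ⟨γ, hγ⟩ := hγ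
  have hl0 : l ≠ 0 := hlp.ne_zero
  obtain ⟨m', hm'⟩ := hlm
  have hm0 : m ≠ 0 := by omega
  have hj : l ∣ j := by
    by_contra hj
    have : Fact r.Prime := ⟨hrp⟩
    have hb0 : (b : ZMod r) = 0 := (ZMod.natCast_eq_zero_iff _ _).mpr hrb
    have ha0 : (a : ZMod r) ≠ 0 := fun h => hra ((ZMod.natCast_eq_zero_iff _ _).mp h)
    have hA1 : (a : ZMod r) ^ m - 1 ≠ 0 := by
      intro h; apply hr 0; rw [h, zero_pow hl0]
    obtain ⟨ψ, hψ⟩ := rq_reduction K hK T A hns α hα r A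
      (by
        rw [← ZMod.intCast_zmod_eq_zero_iff_dvd]
        rw [hT, hA]; push_cast; rw [hb0, zero_pow hm0]; ring)
      (by
        rw [← ZMod.intCast_zmod_eq_zero_iff_dvd]
        rw [hT, hA]; push_cast; rw [hb0, zero_pow hm0]
        intro h; apply hA1; linear_combination h)
    have hψ' : ψ α = (a : ZMod r) ^ m := by rw [hψ, hA]; push_cast; ring
    have h3 := congrArg ψ hγ
    simp only [map_mul, map_pow, map_sub, map_one, hψ'] at h3
    obtain ⟨z, hz⟩ := rq_root (ZMod r) l hlp ((a : ZMod r) ^ m - 1)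
      (ψ γ / ((a : ZMod r) ^ (m' * i))) hA1 j (by
        rw [div_pow, ← h3, eq_div_iff (pow_ne_zero _ (pow_ne_zero _ ha0)), ← pow_mul, ← pow_mul,
          show m' * i * l = m * i by rw [hm']; ring]
        ring) hj
    exact hr z hz
  have hi : l ∣ i := by
    by_contra hi
    have : Fact q.Prime := ⟨hqp⟩
    have ha0 : (a : ZMod q) = 0 := (ZMod.natCast_eq_zero_iff _ _).mpr hqa
    have hb0 : (b : ZMod q) ≠ 0 := fun h => hqb ((ZMod.natCast_eq_zero_iff _ _).mp h)
    have hB1 : 1 - (b : ZMod q) ^ m ≠ 0 := by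
      intro h; apply hq 0; rw [h, zero_pow hl0]
    obtain ⟨ψ, hψ⟩ := rq_reduction K hK T A hns α hα q (1 - (b : ℤ) ^ m)
      (by
        rw [← ZMod.intCast_zmod_eq_zero_iff_dvd]
        rw [hT, hA]; push_cast; rw [ha0, zero_pow hm0]; ring)
      (by
        rw [← ZMod.intCast_zmod_eq_zero_iff_dvd]
        rw [hT]; push_cast; rw [ha0, zero_pow hm0]
        intro h; apply hB1; linear_combination h)
    have hψ' : ψ α = 1 - (b : ZMod q) ^ m := by rw [hψ]; push_cast; ring
    have h3 := congrArg ψ hγ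
    simp only [map_mul, map_pow, map_sub, map_one, hψ'] at h3
    obtain ⟨j', rfl⟩ := hj
    have hne : (1 - (b : ZMod q) ^ m - 1) ≠ 0 := by
      rw [show (1 - (b : ZMod q) ^ m - 1) = - (b : ZMod q) ^ m by ring]
      exact neg_ne_zero.mpr (pow_ne_zero _ hb0)
    obtain ⟨z, hz⟩ := rq_root (ZMod q) l hlp (1 - (b : ZMod q) ^ m)
      (ψ γ / ((1 - (b : ZMod q) ^ m - 1) ^ j')) hB1 i (by
        rw [div_pow, ← h3, eq_div_iff (pow_ne_zero _ (pow_ne_zero _ hne)), ← pow_mul, mul_comm l j'])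
      hi
    exact hq z hz
  exact hij ⟨hi, hj⟩

/-- For every `m > 1` there is one suitable `d`. -/
lemma rq_exists_one (m : ℕ) (hm : 1 < m) : ∃ d : ℤ, 1 < d ∧ Squarefree d ∧
      ∀ (K : Type) [Field K] [NumberField K],
        (∃ x : K, x * x = (d : K)) → Module.finrank ℚ K = 2 →
          m ∣ Nat.card (ClassGroup (𝓞 K)) := by
  obtain ⟨a, b, hb, hab, hc1, hc2, hl⟩ := rq_exists_ab m hm
  have habZ : 3 * (b : ℤ) ^ m + 1 < (a : ℤ) ^ m := by exact_mod_cast hab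
  have hbZ : 1 < (b : ℤ) ^ m := by exact_mod_cast Nat.one_lt_pow (by omega) hb
  obtain ⟨T, hT⟩ : ∃ T : ℤ, T = (a : ℤ) ^ m - (b : ℤ) ^ m + 1 := ⟨_, rfl⟩
  obtain ⟨A, hA⟩ : ∃ A : ℤ, A = (a : ℤ) ^ m := ⟨_, rfl⟩
  obtain ⟨B, hB⟩ : ∃ B : ℤ, B = (b : ℤ) ^ m := ⟨_, rfl⟩
  have hTAB : T = A - B + 1 := by rw [hT, hA, hB]
  rw [← hA, ← hB] at habZ
  rw [← hB] at hbZ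
  have hlo : (T - 3) ^ 2 < T ^ 2 - 4 * A := by rw [hTAB]; nlinarith
  have hhi : T ^ 2 - 4 * A < (T - 2) ^ 2 := by rw [hTAB]; nlinarith
  have hpos : 0 < T ^ 2 - 4 * A := (sq_nonneg _).trans_lt hlo
  have hns : ¬ IsSquare (T ^ 2 - 4 * A) := by
    rintro ⟨x, hx⟩
    rw [hx, ← sq] at hlo hhi
    have h1 := sq_lt_sq.mp hlo
    have h2 := sq_lt_sq.mp hhi
    rw [abs_of_pos (by omega : 0 < T - 3)] at h1
    rw [abs_of_pos (by omega : 0 < T - 2)] at h2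
    omega
  obtain ⟨n, hn⟩ := Int.eq_ofNat_of_zero_le hpos.le
  obtain ⟨D, f, hDf, hD⟩ := Nat.sq_mul_squarefree n
  have hDfZ : (f : ℤ) ^ 2 * D = T ^ 2 - 4 * A := by
    rw [hn, ← hDf]; push_cast; ring
  have hD0 : D ≠ 0 := by
    rintro rfl
    simp at hDfZ
    omega
  have hD1 : D ≠ 1 := by
    rintro rfl
    apply hns
    exact ⟨f, by rw [← hDfZ]; push_cast; ring⟩
  refine ⟨D, by omega, Int.squarefree_natCast.mpr hD, ?_⟩
  intro K _ _ hx hK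
  obtain ⟨x, hx⟩ := hx
  have hDfK : (f : K) ^ 2 * D = T ^ 2 - 4 * A := by exact_mod_cast congrArg (Int.cast : ℤ → K) hDfZ
  have hx' : x * x = (D : K) := by simpa using hx
  have hα : ((T + f * x) / 2 : K) ^ 2 - T * ((T + f * x) / 2) + A = 0 := by
    field_simp
    linear_combination hDfK + (f : K) ^ 2 * hx'
  have hIntegral : IsIntegral ℤ ((T + f * x) / 2 : K) := by
    refine ⟨Polynomial.X ^ 2 - Polynomial.C T * Polynomial.X + Polynomial.C A, by monicity!, ?_⟩
    simp only [Polynomial.eval₂_add, Polynomial.eval₂_sub, Polynomial.eval₂_mul,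
      Polynomial.eval₂_pow, Polynomial.eval₂_X, Polynomial.eval₂_C]
    simp only [eq_intCast]
    exact hα
  obtain ⟨α, hαK⟩ : ∃ α : 𝓞 K, algebraMap (𝓞 K) K α = (T + f * x) / 2 := ⟨⟨_, hIntegral⟩, rfl⟩
  refine rq_main m hm a b hb hab hc1 hc2 hl T A hT hA hns hpos K hK α ?_
  apply RingOfIntegers.coe_injective
  rw [map_add, map_sub, map_mul, map_pow, hαK, map_intCast, map_intCast, map_zero]
  exact hα

/-- The quadratic field `ℚ(√d)` exists. -/
lemma rq_exists_field (d : ℤ) (hd : 1 < d) (hsq : Squarefree d) :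
    ∃ h : ℕ, 0 < h ∧ ∃ (K : Type) (_ : Field K) (_ : NumberField K),
      (∃ x : K, x * x = (d : K)) ∧ Module.finrank ℚ K = 2 ∧ Nat.card (ClassGroup (𝓞 K)) = h := by
  let P : Polynomial ℚ := Polynomial.X ^ 2 - Polynomial.C (d : ℚ)
  have hdeg : P.natDegree = 2 := by simp only [P]; compute_degree!
  have hmon : P.Monic := by simp only [P]; monicity!
  have hirr : Irreducible P := by
    rw [hmon.irreducible_iff_roots_eq_zero_of_degree_le_three (by omega) (by omega)]
    rw [Multiset.eq_zero_iff_forall_notMem]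
    intro x hx
    rw [Polynomial.mem_roots hmon.ne_zero, Polynomial.IsRoot.def] at hx
    simp only [P, Polynomial.eval_sub, Polynomial.eval_pow, Polynomial.eval_X,
      Polynomial.eval_C] at hx
    have : IsSquare ((d : ℤ) : ℚ) := ⟨x, by linear_combination -hx⟩
    obtain ⟨y, hy⟩ := Rat.isSquare_intCast_iff.mp this
    have hu := hsq y ⟨1, by rw [hy]; ring⟩
    rcases Int.isUnit_iff.mp hu with h | h <;> rw [h] at hy <;> omega
  have : Fact (Irreducible P) := ⟨hirr⟩
  have hfin : Module.Finite ℚ (AdjoinRoot P) := hmon.finite_adjoinRoot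
  have hnf : NumberField (AdjoinRoot P) := 
    @NumberField.mk _ _ (algebraRat.charZero _) (by convert hfin)
  refine ⟨Nat.card (ClassGroup (𝓞 (AdjoinRoot P))), Nat.card_pos, AdjoinRoot P, inferInstance, hnf,
    ⟨AdjoinRoot.root P, ?_⟩, ?_, rfl⟩
  · have h := AdjoinRoot.eval₂_root P
    simp only [P, Polynomial.eval₂_sub, Polynomial.eval₂_pow, Polynomial.eval₂_X,
      Polynomial.eval₂_C] at h
    have h1 : AdjoinRoot.root P ^ 2 - AdjoinRoot.of P (d : ℚ) = 0 := h
    have h2 : AdjoinRoot.of P (d : ℚ) = (d : AdjoinRoot P) := map_intCast (AdjoinRoot.of P) d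
    linear_combination h1 + h2
  · have h := (AdjoinRoot.powerBasis hmon.ne_zero).finrank
    rw [AdjoinRoot.powerBasis_dim, hdeg] at h
    convert h

/-- Yamamoto, Weinberger: for every integer `m > 1`, there are infinitely many real
quadratic fields whose class number is divisible by `m`; i.e. the set of squarefree
integers `d > 1` such that `m` divides the class number of `ℚ(√d)` (characterized as a
degree-2 number field containing a square root of `d`) is infinite. -/
theorem infinitely_many_real_quad_class_number_divisible (m : ℕ) (hm : 1 < m) :
    {d : ℤ | 1 < d ∧ Squarefree d ∧
      ∀ (K : Type) [Field K] [NumberField K],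
        (∃ x : K, x * x = (d : K)) → Module.finrank ℚ K = 2 →
          m ∣ Nat.card (ClassGroup (𝓞 K))}.Infinite := by
  intro hfin
  have hex : ∀ d : ℤ, ∃ h : ℕ, (1 < d ∧ Squarefree d) →
      (0 < h ∧ ∃ (K : Type) (_ : Field K) (_ : NumberField K),
      (∃ x : K, x * x = (d : K)) ∧ Module.finrank ℚ K = 2 ∧
        Nat.card (ClassGroup (𝓞 K)) = h) := by
    intro d
    by_cases hd : 1 < d ∧ Squarefree d
    · obtain ⟨h, hh⟩ := rq_exists_field d hd.1 hd.2
      exact ⟨h, fun _ => hh⟩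
    · exact ⟨0, fun h => absurd h hd⟩
  choose h hh using hex
  let S := ∑ d ∈ hfin.toFinset, h d
  have hM : m ≤ m * (1 + S) := Nat.le_mul_of_pos_right m (by omega)
  obtain ⟨d, hd1, hd2, hd3⟩ := rq_exists_one (m * (1 + S)) (by omega)
  obtain ⟨hpos, K, iK, nK, hx, hK, hcard⟩ := hh d ⟨hd1, hd2⟩
  have hdvd := hd3 K hx hK
  rw [hcard] at hdvd
  have hle := Nat.le_of_dvd hpos hdvd
  have hmem : d ∈ hfin.toFinset := by
    rw [Set.Finite.mem_toFinset]
    exact ⟨hd1, hd2, fun K _ _ hx hK => (Dvd.intro _ rfl).trans (hd3 K hx hK)⟩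
  have hle2 : h d ≤ S := Finset.single_le_sum (f := h) (fun _ _ => Nat.zero_le _) hmem
  nlinarith
end

section
/- For every t ∈ ℚ, there exists c ∈ ℚ such that the discriminant Δ of the Weierstrass curve E_t : y² = x³ − (2t²−2t+1)(4t⁴−12t³+6t²+2t−1)x² + 16(t²−3t+1)(t−1)⁵t⁵x satisfies Δ = (2t−1)(4t²−2t−1) · c²; that is, the discriminant of E_t is congruent to Δ₁₀(t) = (2t−1)(4t²−2t−1) modulo squares of rational numbers. -/
/-- The universal elliptic curve over `X₁(10)`:
`E_t : y² = x³ − (2t²−2t+1)(4t⁴−12t³+6t²+2t−1)x² + 16(t²−3t+1)(t−1)⁵t⁵ x`. -/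
noncomputable def Et (t : ℚ) : WeierstrassCurve ℚ where
  a₁ := 0
  a₂ := -(2*t^2 - 2*t + 1) * (4*t^4 - 12*t^3 + 6*t^2 + 2*t - 1)
  a₃ := 0
  a₄ := 16 * (t^2 - 3*t + 1) * (t - 1)^5 * t^5
  a₆ := 0

/-- The discriminant of `E_t` is `Δ₁₀(t) = (2t−1)(4t²−2t−1)` modulo rational squares. -/
theorem Et_discriminant_mod_squares (t : ℚ) :
    ∃ c : ℚ, (Et t).Δ = (2*t - 1) * (4*t^2 - 2*t - 1) * c^2 := by
  refine ⟨4 * (16 * (t^2 - 3*t + 1) * (t - 1)^5 * t^5) * (2*t - 1)^2, ?_⟩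
  simp only [Et, WeierstrassCurve.Δ, WeierstrassCurve.b₂, WeierstrassCurve.b₄,
    WeierstrassCurve.b₆, WeierstrassCurve.b₈]
  ring
end

section
/- Let (t,u,z) ∈ ℚ³ satisfy (2t−1)⁵(4t²−2t−1)z² = (2u−1)⁵(4u²−2u−1), with t,u ∉ {0, 1/2, 1}. Then a₆(t,u,z) ≠ 0, where a₆ is the polynomial defined in the context. -/
theorem five_not_sq (q : ℚ) : q ^ 2 ≠ 5 := by
  intro h
  have hirr : Irrational (Real.sqrt 5) := by
    have h5 : Nat.Prime 5 := by norm_num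
    exact_mod_cast h5.irrational_sqrt
  apply hirr
  refine ⟨|q|, ?_⟩
  have h' : (q : ℝ) ^ 2 = 5 := by exact_mod_cast h
  rw [← h', Real.sqrt_sq_eq_abs]
  push_cast
  rfl

/-- If `(t,u,z) ∈ ℚ³` satisfies `(2t−1)⁵(4t²−2t−1)z² = (2u−1)⁵(4u²−2u−1)` and
`t, u ∉ {0, 1/2, 1}`, then the coefficient `a₆(t,u,z)` is nonzero. -/
theorem a6_ne_zero (t u z : ℚ)
    (hrel : (2*t - 1)^5 * (4*t^2 - 2*t - 1) * z^2 = (2*u - 1)^5 * (4*u^2 - 2*u - 1))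
    (ht0 : t ≠ 0) (hthalf : t ≠ 1/2) (ht1 : t ≠ 1)
    (hu0 : u ≠ 0) (huhalf : u ≠ 1/2) (hu1 : u ≠ 1) :
    z * (-128*t^7*z^2 + 384*t^6*z^2 - 448*t^5*z^2 + 240*t^4*z^2 - 40*t^3*z^2
      - 16*t^2*z^2 + 8*t*z^2 + 64*u^12 - 512*u^11 + 1664*u^10 - 2880*u^9 + 2880*u^8
      - 1536*u^7 + 128*u^6 + 384*u^5 - 240*u^4 + 40*u^3 + 16*u^2 - 8*u - z^2 + 1) ≠ 0 := by
  have hz : z ≠ 0 := by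
    rintro rfl
    have h0 : (2*u - 1)^5 * (4*u^2 - 2*u - 1) = 0 := by rw [← hrel]; ring
    rcases mul_eq_zero.mp h0 with h | h
    · have h2 := pow_eq_zero_iff (n := 5) (by norm_num) |>.mp h
      exact huhalf (by linarith)
    · exact five_not_sq (4*u - 1) (by linear_combination 4 * h)
  intro h
  have h1 := (mul_eq_zero.mp h).resolve_left hz
  have h2 : 64 * u^5 * (u - 1)^5 * (u^2 - 3*u + 1) = 0 := by
    linear_combination h1 + hrel
  have h3 : u^2 - 3*u + 1 ≠ 0 := fun h => five_not_sq (2*u - 3) (by linear_combination 4 * h)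
  have h4 : u - 1 ≠ 0 := sub_ne_zero.mpr hu1
  exact mul_ne_zero (mul_ne_zero (mul_ne_zero (by norm_num) (pow_ne_zero 5 hu0))
    (pow_ne_zero 5 h4)) h3 h2
end

section
/- Let (t,u,z) ∈ ℚ³ satisfy (2t−1)⁵(4t²−2t−1)z² = (2u−1)⁵(4u²−2u−1), with a(t,u,z) ≠ 0 and t,u ∉ {0, 1/2, 1}. Then the polynomial a·(a₆X⁶ + a₄X⁴ + a₂X² + a₀) ∈ ℚ[X] (with a, a₀, a₂, a₄, a₆ evaluated at (t,u,z) as in the context) has degree 6 and is separable (squarefree); in particular the equation y² = a(a₆x⁶ + a₄x⁴ + a₂x² + a₀) defines a smooth projective curve of genus 2 over ℚ. -/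
open Polynomial

/-- A Bezout combination equal to a nonzero constant gives coprimality. -/
lemma coprime_of_const {p q A B : ℚ[X]} {c : ℚ} (hc : c ≠ 0) (h : A * p + B * q = C c) :
    IsCoprime p q := by
  refine ⟨C c⁻¹ * A, C c⁻¹ * B, ?_⟩
  have h1 : C c⁻¹ * C c = (1 : ℚ[X]) := by rw [← C_mul, inv_mul_cancel₀ hc, C_1]
  linear_combination C c⁻¹ * h + h1

lemma quad_sep (z : ℚ) : (C z * X^2 - 1 : ℚ[X]).Separable := by
  refine ⟨-1, C (1/2) * X, ?_⟩
  have h1 : C (1/2 : ℚ) * 2 = (1 : ℚ[X]) := by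
    rw [← C_ofNat, ← C_mul]; norm_num
  simp only [derivative_sub, derivative_mul, derivative_C, derivative_X_pow, derivative_one]
  push_cast
  simp only [map_ofNat]
  linear_combination (C z * X^2) * h1

lemma quartic_sep (α β γ : ℚ) (hγ : γ ≠ 0) (hD : β^2 - 4*α*γ ≠ 0) :
    (C α * X^4 + C β * X^2 + C γ : ℚ[X]).Separable := by
  have hd : derivative (C α * X^4 + C β * X^2 + C γ : ℚ[X])
      = (2 * X) * (2 * C α * X^2 + C β) := by
    simp only [derivative_add, derivative_mul, derivative_C, derivative_X_pow]
    push_cast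
    simp only [map_ofNat]
    ring
  rw [separable_def, hd]
  refine IsCoprime.mul_right ?_ ?_
  · refine coprime_of_const (A := 2) (B := -(C α * X^3 + C β * X)) (c := 2*γ) (by simpa using hγ) ?_
    simp only [C_mul, map_ofNat]
    ring
  · refine coprime_of_const (A := -4 * C α) (B := 2 * C α * X^2 + C β) hD ?_
    simp only [C_mul, C_sub, C_pow, map_ofNat]
    ring

lemma core (P Q U z : ℚ) (hQ : Q ≠ 0) (hγ : P^2 - Q ≠ 0) (hn : z * P - U ≠ 0) :
    ((C z * X^2 - 1) * (C (U^2 - Q*z^2) * X^4 + C (2*Q*z - 2*P*U) * X^2 + C (P^2 - Q)) :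
      ℚ[X]).Separable := by
  refine (quad_sep z).mul (quartic_sep _ _ _ hγ ?_) ?_
  · have : (2*Q*z - 2*P*U)^2 - 4*(U^2 - Q*z^2)*(P^2 - Q) = 4 * (Q * (z*P - U)^2) := by ring
    rw [this]
    positivity
  · have h1 : IsCoprime (C z * X^2 - 1 : ℚ[X]) (C U * X^2 - C P) := by
      refine coprime_of_const (A := C U) (B := - C z) hn ?_
      simp only [C_mul, C_sub]
      ring
    have h2 := (h1.mul_right h1).add_mul_left_right (-(C Q * (C z * X^2 - 1)))
    refine (congrArg (IsCoprime (C z * X^2 - 1 : ℚ[X])) ?_).mp h2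
    simp only [C_mul, C_sub, C_pow, map_ofNat]
    ring

lemma irr1 (u : ℚ) : u^2 - 3*u + 1 ≠ 0 := by
  intro h
  have h5 : IsSquare (5 : ℚ) := ⟨2*u - 3, by linear_combination -4*h⟩
  rw [show (5:ℚ) = ((5:ℕ):ℚ) by norm_num, Rat.isSquare_natCast_iff] at h5
  exact (by norm_num : Nat.Prime 5).prime.irreducible.not_isSquare h5

lemma irr2 (u : ℚ) : 4*u^2 - 2*u - 1 ≠ 0 := by
  intro h
  apply irr1 (2*u + 1)
  linear_combination h

set_option maxHeartbeats 1000000 in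
/-- Given a solution `(t,u,z)` of `(2t−1)⁵(4t²−2t−1)z² = (2u−1)⁵(4u²−2u−1)` with
`a ≠ 0` and `t, u ∉ {0, 1/2, 1}`, the sextic polynomial
`a(a₆X⁶ + a₄X⁴ + a₂X² + a₀) ∈ ℚ[X]` has degree 6 and is separable, so that
`y² = a(a₆x⁶ + a₄x⁴ + a₂x² + a₀)` defines a smooth projective genus 2 curve over `ℚ`. -/
theorem sextic_degree_six_and_separable (t u z : ℚ)
    (hrel : (2*t - 1)^5 * (4*t^2 - 2*t - 1) * z^2 = (2*u - 1)^5 * (4*u^2 - 2*u - 1))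
    (ht0 : t ≠ 0) (hthalf : t ≠ 1/2) (ht1 : t ≠ 1)
    (hu0 : u ≠ 0) (huhalf : u ≠ 1/2) (hu1 : u ≠ 1)
    (a a0 a2 a4 a6 : ℚ)
    (ha : a = 2*(8*t^6*z - 32*t^5*z + 40*t^4*z - 20*t^3*z + 4*t*z - 8*u^6 + 32*u^5 - 40*u^4 + 20*u^3
      - 4*u - z + 1))
    (ha0 : a0 = -64*t^5*(t - 1)^5*(t^2 - 3*t + 1))
    (ha2 : a2 = 2*(32*t^12*z - 256*t^11*z + 832*t^10*z - 1440*t^9*z + 1440*t^8*z - 960*t^7*z +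
      64*t^6*u^6 - 256*t^6*u^5 + 320*t^6*u^4 - 160*t^6*u^3 + 32*t^6*u + 640*t^6*z -
      8*t^6 - 256*t^5*u^6 + 1024*t^5*u^5 - 1280*t^5*u^4 + 640*t^5*u^3 - 128*t^5*u -
      480*t^5*z + 32*t^5 + 320*t^4*u^6 - 1280*t^4*u^5 + 1600*t^4*u^4 - 800*t^4*u^3 +
      160*t^4*u + 240*t^4*z - 40*t^4 - 160*t^3*u^6 + 640*t^3*u^5 - 800*t^3*u^4 +
      400*t^3*u^3 - 80*t^3*u - 40*t^3*z + 20*t^3 - 16*t^2*z + 32*t*u^6 - 128*t*u^5 +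
      160*t*u^4 - 80*t*u^3 + 16*t*u + 8*t*z - 4*t - 8*u^6 + 32*u^5 - 40*u^4 + 20*u^3 -
      4*u - z + 1))
    (ha4 : a4 = 384*t^7*z^2 - 128*t^6*u^6*z + 512*t^6*u^5*z - 640*t^6*u^4*z + 320*t^6*u^3*z -
      64*t^6*u*z - 1152*t^6*z^2 + 16*t^6*z + 512*t^5*u^6*z - 2048*t^5*u^5*z +
      2560*t^5*u^4*z - 1280*t^5*u^3*z + 256*t^5*u*z + 1344*t^5*z^2 - 64*t^5*z -
      640*t^4*u^6*z + 2560*t^4*u^5*z - 3200*t^4*u^4*z + 1600*t^4*u^3*z - 320*t^4*u*z -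
      720*t^4*z^2 + 80*t^4*z + 320*t^3*u^6*z - 1280*t^3*u^5*z + 1600*t^3*u^4*z -
      800*t^3*u^3*z + 160*t^3*u*z + 120*t^3*z^2 - 40*t^3*z + 48*t^2*z^2 - 64*t*u^6*z +
      256*t*u^5*z - 320*t*u^4*z + 160*t*u^3*z - 32*t*u*z - 24*t*z^2 + 8*t*z - 64*u^12
      + 512*u^11 - 1664*u^10 + 2880*u^9 - 2880*u^8 + 1536*u^7 + 16*u^6*z - 128*u^6 -
      64*u^5*z - 384*u^5 + 80*u^4*z + 240*u^4 - 40*u^3*z - 40*u^3 - 16*u^2 + 8*u*z +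
      8*u + 3*z^2 - 2*z - 1)
    (ha6 : a6 = z*(-128*t^7*z^2 + 384*t^6*z^2 - 448*t^5*z^2 + 240*t^4*z^2 - 40*t^3*z^2 - 16*t^2*z^2 +
      8*t*z^2 + 64*u^12 - 512*u^11 + 1664*u^10 - 2880*u^9 + 2880*u^8 - 1536*u^7 +
      128*u^6 + 384*u^5 - 240*u^4 + 40*u^3 + 16*u^2 - 8*u - z^2 + 1))
    (hane : a ≠ 0) :
    (C (a * a6) * X^6 + C (a * a4) * X^4 + C (a * a2) * X^2 + C (a * a0)).natDegree = 6 ∧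
    (C (a * a6) * X^6 + C (a * a4) * X^4 + C (a * a2) * X^2 + C (a * a0)).Separable := by
  have hthalf' : 2*t - 1 ≠ 0 := fun h => hthalf (by linarith)
  have huhalf' : 2*u - 1 ≠ 0 := fun h => huhalf (by linarith)
  have ht1' : t - 1 ≠ 0 := sub_ne_zero.mpr ht1
  have hu1' : u - 1 ≠ 0 := sub_ne_zero.mpr hu1
  obtain ⟨P, hP⟩ : ∃ P, P = 8*t^6 - 32*t^5 + 40*t^4 - 20*t^3 + 4*t - 1 := ⟨_, rfl⟩
  obtain ⟨U, hU⟩ : ∃ U, U = 8*u^6 - 32*u^5 + 40*u^4 - 20*u^3 + 4*u - 1 := ⟨_, rfl⟩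
  obtain ⟨Q, hQ⟩ : ∃ Q, Q = (2*t - 1)^5 * (4*t^2 - 2*t - 1) := ⟨_, rfl⟩
  have hQ0 : Q ≠ 0 := by
    rw [hQ]; exact mul_ne_zero (pow_ne_zero _ hthalf') (irr2 t)
  have hz : z ≠ 0 := by
    rintro rfl
    have := mul_ne_zero (pow_ne_zero 5 huhalf') (irr2 u)
    apply this
    rw [← hrel]; ring
  have eγ : P^2 - Q = 64*t^5*(t - 1)^5*(t^2 - 3*t + 1) := by rw [hP, hQ]; ring
  have hγ : P^2 - Q ≠ 0 := by
    rw [eγ]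
    exact mul_ne_zero (mul_ne_zero (mul_ne_zero (by norm_num) (pow_ne_zero _ ht0))
      (pow_ne_zero _ ht1')) (irr1 t)
  have eα : U^2 - Q*z^2 = 64*u^5*(u - 1)^5*(u^2 - 3*u + 1) := by
    rw [hQ, hrel, hU]; ring
  have hα : U^2 - Q*z^2 ≠ 0 := by
    rw [eα]
    exact mul_ne_zero (mul_ne_zero (mul_ne_zero (by norm_num) (pow_ne_zero _ hu0))
      (pow_ne_zero _ hu1')) (irr1 u)
  have ea : a = 2*(z*P - U) := by rw [ha, hP, hU]; ring
  have hn : z*P - U ≠ 0 := fun h => hane (by rw [ea, h, mul_zero])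
  have ea0 : a0 = Q - P^2 := by rw [ha0, hP, hQ]; ring
  have ea2 : a2 = P^2*z + 2*P*U - 3*Q*z := by rw [ha2, hP, hQ, hU]; ring
  have ea4 : a4 = 3*Q*z^2 - 2*P*U*z - U^2 := by rw [ha4, hP, hQ, hU]; ring
  have ea6 : a6 = z*(U^2 - Q*z^2) := by rw [ha6, hQ, hU]; ring
  have ha6ne : a * a6 ≠ 0 := mul_ne_zero hane (by rw [ea6]; exact mul_ne_zero hz hα)
  clear ha ha0 ha2 ha4 ha6
  refine ⟨by compute_degree!; exact mul_ne_zero_iff.mp ha6ne, ?_⟩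
  have key := Separable.unit_mul (isUnit_C.mpr hane.isUnit) (core P Q U z hQ0 hγ hn)
  convert key using 1
  rw [ea0, ea2, ea4, ea6]
  simp only [C_mul, C_sub, C_add, C_pow, map_ofNat]
  ring
end

section
/- Let (t,u,z) ∈ ℚ³ satisfy (2t−1)⁵(4t²−2t−1)z² = (2u−1)⁵(4u²−2u−1), with a(t,u,z) ≠ 0 and t,u ∉ {0, 1/2, 1}. Then the two cubic polynomials a·(a₀X³ + a₂X² + a₄X + a₆) and a·(a₆X³ + a₄X² + a₂X + a₀) in ℚ[X] (with a, a₀, a₂, a₄, a₆ evaluated at (t,u,z) as in the context) each have degree 3 and are separable; in particular the equations y² = a(a₀x³ + a₂x² + a₄x + a₆) and y² = a(a₆x³ + a₄x² + a₂x + a₀) define elliptic curves over ℚ. -/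
open Polynomial

/-- 5 is not a rational square. -/
lemma sq_ne_five_aux (x : ℚ) : x ^ 2 ≠ 5 := by
  intro h
  have h5 : Irrational (Real.sqrt 5) := by
    have := Nat.Prime.irrational_sqrt (p := 5) (by norm_num)
    exact_mod_cast this
  apply h5
  refine ⟨|x|, ?_⟩
  have h' : ((x : ℝ)) ^ 2 = 5 := by exact_mod_cast h
  rw [← h', Real.sqrt_sq_eq_abs]
  push_cast
  rfl

/-- A product of a linear and a quadratic polynomial is separable when the quadratic has nonzero
discriminant and does not vanish at the root of the linear factor. -/
lemma cubic_aux (m n α β γ c3 c2 c1 c0 : ℚ) (hm : m ≠ 0) (hα : α ≠ 0)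
    (hd : β ^ 2 - α * γ ≠ 0) (hr : α * n ^ 2 + 2 * β * m * n + γ * m ^ 2 ≠ 0)
    (h3 : c3 = m * α) (h2 : c2 = 2 * m * β - n * α) (h1 : c1 = m * γ - 2 * n * β)
    (h0 : c0 = - n * γ) :
    (C c3 * X ^ 3 + C c2 * X ^ 2 + C c1 * X + C c0 : ℚ[X]).natDegree = 3 ∧
      (C c3 * X ^ 3 + C c2 * X ^ 2 + C c1 * X + C c0 : ℚ[X]).Separable := by
  have h3' : c3 ≠ 0 := by rw [h3]; exact mul_ne_zero hm hα
  refine ⟨natDegree_cubic h3', ?_⟩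
  have key : (C c3 * X ^ 3 + C c2 * X ^ 2 + C c1 * X + C c0 : ℚ[X])
      = (C m * X - C n) * (C α * X ^ 2 + C (2 * β) * X + C γ) := by
    subst h3 h2 h1 h0
    simp only [C_mul, C_sub, C_neg]
    ring
  rw [key]
  have hC : ∀ k : ℚ, k ≠ 0 → (C k⁻¹ * C k : ℚ[X]) = 1 := by
    intro k hk
    rw [← C_mul, inv_mul_cancel₀ hk, C_1]
  refine Separable.mul ?_ ?_ ?_
  · refine ⟨0, C m⁻¹, ?_⟩
    simp only [derivative_sub, derivative_mul, derivative_C, derivative_X]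
    linear_combination hC m hm
  · refine ⟨C (β ^ 2 - α * γ)⁻¹ * (- C α), C (β ^ 2 - α * γ)⁻¹ * (C α * X + C β) * C (1/2), ?_⟩
    have h := hC _ hd
    have h12 : (C (1/2) * C 2 : ℚ[X]) = 1 := by rw [← C_mul]; norm_num
    have e2 : (C 2 : ℚ[X]) = 2 := rfl
    rw [e2] at h12
    simp only [derivative_add, derivative_mul, derivative_C, derivative_X, derivative_X_pow,
      C_mul, C_sub, C_pow, e2] at h ⊢
    norm_num
    norm_num at h12 h
    rw [e2]
    linear_combination h + C (β ^ 2 - α * γ)⁻¹ * (C α * X + C β) ^ 2 * h12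
  · refine ⟨C (α * n ^ 2 + 2 * β * m * n + γ * m ^ 2)⁻¹ *
        (-(C (α * m) * X + C (2 * β * m + α * n))),
      C (α * n ^ 2 + 2 * β * m * n + γ * m ^ 2)⁻¹ * C (m ^ 2), ?_⟩
    have h := hC _ hr
    simp only [C_mul, C_add, C_pow] at h ⊢
    linear_combination h

set_option maxHeartbeats 1000000 in
/-- Given a solution `(t,u,z)` of `(2t−1)⁵(4t²−2t−1)z² = (2u−1)⁵(4u²−2u−1)` with
`a ≠ 0` and `t, u ∉ {0, 1/2, 1}`, the cubic polynomials
`a(a₀X³ + a₂X² + a₄X + a₆)` and `a(a₆X³ + a₄X² + a₂X + a₀)` in `ℚ[X]` each have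
degree 3 and are separable, so that `y² = a(a₀x³ + a₂x² + a₄x + a₆)` and
`y² = a(a₆x³ + a₄x² + a₂x + a₀)` define elliptic curves over `ℚ`. -/
theorem cubics_degree_three_and_separable (t u z : ℚ)
    (hrel : (2*t - 1)^5 * (4*t^2 - 2*t - 1) * z^2 = (2*u - 1)^5 * (4*u^2 - 2*u - 1))
    (ht0 : t ≠ 0) (hthalf : t ≠ 1/2) (ht1 : t ≠ 1)
    (hu0 : u ≠ 0) (huhalf : u ≠ 1/2) (hu1 : u ≠ 1)
    (a a0 a2 a4 a6 : ℚ)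
    (ha : a = 2*(8*t^6*z - 32*t^5*z + 40*t^4*z - 20*t^3*z + 4*t*z - 8*u^6 + 32*u^5 - 40*u^4 + 20*u^3
      - 4*u - z + 1))
    (ha0 : a0 = -64*t^5*(t - 1)^5*(t^2 - 3*t + 1))
    (ha2 : a2 = 2*(32*t^12*z - 256*t^11*z + 832*t^10*z - 1440*t^9*z + 1440*t^8*z - 960*t^7*z +
      64*t^6*u^6 - 256*t^6*u^5 + 320*t^6*u^4 - 160*t^6*u^3 + 32*t^6*u + 640*t^6*z -
      8*t^6 - 256*t^5*u^6 + 1024*t^5*u^5 - 1280*t^5*u^4 + 640*t^5*u^3 - 128*t^5*u -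
      480*t^5*z + 32*t^5 + 320*t^4*u^6 - 1280*t^4*u^5 + 1600*t^4*u^4 - 800*t^4*u^3 +
      160*t^4*u + 240*t^4*z - 40*t^4 - 160*t^3*u^6 + 640*t^3*u^5 - 800*t^3*u^4 +
      400*t^3*u^3 - 80*t^3*u - 40*t^3*z + 20*t^3 - 16*t^2*z + 32*t*u^6 - 128*t*u^5 +
      160*t*u^4 - 80*t*u^3 + 16*t*u + 8*t*z - 4*t - 8*u^6 + 32*u^5 - 40*u^4 + 20*u^3 -
      4*u - z + 1))
    (ha4 : a4 = 384*t^7*z^2 - 128*t^6*u^6*z + 512*t^6*u^5*z - 640*t^6*u^4*z + 320*t^6*u^3*z -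
      64*t^6*u*z - 1152*t^6*z^2 + 16*t^6*z + 512*t^5*u^6*z - 2048*t^5*u^5*z +
      2560*t^5*u^4*z - 1280*t^5*u^3*z + 256*t^5*u*z + 1344*t^5*z^2 - 64*t^5*z -
      640*t^4*u^6*z + 2560*t^4*u^5*z - 3200*t^4*u^4*z + 1600*t^4*u^3*z - 320*t^4*u*z -
      720*t^4*z^2 + 80*t^4*z + 320*t^3*u^6*z - 1280*t^3*u^5*z + 1600*t^3*u^4*z -
      800*t^3*u^3*z + 160*t^3*u*z + 120*t^3*z^2 - 40*t^3*z + 48*t^2*z^2 - 64*t*u^6*z +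
      256*t*u^5*z - 320*t*u^4*z + 160*t*u^3*z - 32*t*u*z - 24*t*z^2 + 8*t*z - 64*u^12
      + 512*u^11 - 1664*u^10 + 2880*u^9 - 2880*u^8 + 1536*u^7 + 16*u^6*z - 128*u^6 -
      64*u^5*z - 384*u^5 + 80*u^4*z + 240*u^4 - 40*u^3*z - 40*u^3 - 16*u^2 + 8*u*z +
      8*u + 3*z^2 - 2*z - 1)
    (ha6 : a6 = z*(-128*t^7*z^2 + 384*t^6*z^2 - 448*t^5*z^2 + 240*t^4*z^2 - 40*t^3*z^2 - 16*t^2*z^2 +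
      8*t*z^2 + 64*u^12 - 512*u^11 + 1664*u^10 - 2880*u^9 + 2880*u^8 - 1536*u^7 +
      128*u^6 + 384*u^5 - 240*u^4 + 40*u^3 + 16*u^2 - 8*u - z^2 + 1))
    (hane : a ≠ 0) :
    ((C (a * a0) * X^3 + C (a * a2) * X^2 + C (a * a4) * X + C (a * a6)).natDegree = 3 ∧
      (C (a * a0) * X^3 + C (a * a2) * X^2 + C (a * a4) * X + C (a * a6)).Separable) ∧
    ((C (a * a6) * X^3 + C (a * a4) * X^2 + C (a * a2) * X + C (a * a0)).natDegree = 3 ∧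
      (C (a * a6) * X^3 + C (a * a4) * X^2 + C (a * a2) * X + C (a * a0)).Separable) := by
  have hquad : ∀ x : ℚ, x ^ 2 - 3 * x + 1 ≠ 0 := fun x hx =>
    sq_ne_five_aux (2 * x - 3) (by linear_combination 4 * hx)
  have hquad2 : ∀ x : ℚ, 4 * x ^ 2 - 2 * x - 1 ≠ 0 := fun x hx =>
    sq_ne_five_aux (4 * x - 1) (by linear_combination 4 * hx)
  have hq : ∀ x : ℚ, x ≠ 1 / 2 → (2 * x - 1) ^ 5 * (4 * x ^ 2 - 2 * x - 1) ≠ 0 := fun x hx =>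
    mul_ne_zero (pow_ne_zero _ (fun h => hx (by linarith))) (hquad2 x)
  have hr : ∀ x : ℚ, x ≠ 0 → x ≠ 1 → -64 * x ^ 5 * (x - 1) ^ 5 * (x ^ 2 - 3 * x + 1) ≠ 0 :=
    fun x h0 h1 => mul_ne_zero (mul_ne_zero (mul_ne_zero (by norm_num) (pow_ne_zero _ h0))
      (pow_ne_zero _ (sub_ne_zero.mpr h1))) (hquad x)
  have hz : z ≠ 0 := by
    rintro rfl
    exact hq u huhalf (by rw [← hrel]; ring)
  have hqt := hq t hthalf
  have hrt := hr t ht0 ht1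
  have hru := hr u hu0 hu1
  obtain ⟨p, hp⟩ : ∃ p, p = 8*t^6 - 32*t^5 + 40*t^4 - 20*t^3 + 4*t - 1 := ⟨_, rfl⟩
  obtain ⟨P, hP⟩ : ∃ P, P = 8*u^6 - 32*u^5 + 40*u^4 - 20*u^3 + 4*u - 1 := ⟨_, rfl⟩
  obtain ⟨q, hqd⟩ : ∃ q, q = (2*t - 1)^5 * (4*t^2 - 2*t - 1) := ⟨_, rfl⟩
  have ea : a = 2 * (p * z - P) := by rw [ha, hp, hP]; ring
  have e0 : a0 = q - p ^ 2 := by rw [ha0, hp, hqd]; ring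
  have e2 : a2 = z * (p ^ 2 - 3 * q) + 2 * p * P := by rw [ha2, hp, hP, hqd]; ring
  have e4 : a4 = 3 * q * z ^ 2 - 2 * p * P * z - P ^ 2 := by rw [ha4, hp, hP, hqd]; ring
  have e6 : a6 = z * (P ^ 2 - q * z ^ 2) := by rw [ha6, hP, hqd]; ring
  have hα : q - p ^ 2 ≠ 0 := by rw [← e0, ha0]; exact hrt
  have hγ : q * z ^ 2 - P ^ 2 ≠ 0 := by
    have : q * z ^ 2 - P ^ 2 = -64 * u ^ 5 * (u - 1) ^ 5 * (u ^ 2 - 3 * u + 1) := by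
      rw [hqd, hrel, hP]; ring
    rw [this]; exact hru
  have hw : p * z - P ≠ 0 := fun h => hane (by rw [ea, h, mul_zero])
  rw [← hqd] at hqt
  clear hrel ha ha0 ha2 ha4 ha6 hp hP hqd hrt hru
  have hdisc : (a * (p * P - q * z)) ^ 2 - (a * (q - p ^ 2)) * (a * (q * z ^ 2 - P ^ 2)) ≠ 0 := by
    have : (a * (p * P - q * z)) ^ 2 - (a * (q - p ^ 2)) * (a * (q * z ^ 2 - P ^ 2))
        = a ^ 2 * (q * (p * z - P) ^ 2) := by ring
    rw [this]
    exact mul_ne_zero (pow_ne_zero _ hane) (mul_ne_zero hqt (pow_ne_zero _ hw))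
  have hval : -(a * (p * z - P) ^ 2) ≠ 0 :=
    neg_ne_zero.mpr (mul_ne_zero hane (pow_ne_zero _ hw))
  constructor
  · refine cubic_aux 1 z (a * (q - p ^ 2)) (a * (p * P - q * z)) (a * (q * z ^ 2 - P ^ 2))
      _ _ _ _ one_ne_zero (mul_ne_zero hane hα) hdisc ?_ ?_ ?_ ?_ ?_
    · convert hval using 1; ring
    · rw [e0]; ring
    · rw [e2]; ring
    · rw [e4]; ring
    · rw [e6]; ring
  · refine cubic_aux (-z) (-1) (a * (q * z ^ 2 - P ^ 2)) (a * (p * P - q * z)) (a * (q - p ^ 2))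
      _ _ _ _ (neg_ne_zero.mpr hz) (mul_ne_zero hane hγ) ?_ ?_ ?_ ?_ ?_ ?_
    · convert hdisc using 1; ring
    · convert hval using 1; ring
    · rw [e6]; ring
    · rw [e4]; ring
    · rw [e2]; ring
    · rw [e0]; ring
end
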